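/- arXiv:cs/0605071 — 4 statements merged into one kernel-verified Lean document; each statement's English description precedes it below -/
import Mathlib

section
/- For the two-user Gaussian interference channel with degraded message sets in which transmitter 1 knows both messages (arbitrary real b), the dirty-paper-coding region is achievable: for every α ∈ [0,1], every rate pair (R₁,R₂) with R₁ ≤ ½ log(1 + αP₁) and R₂ ≤ ½ log( (1 + b²P₁ + 2|b|√((1−α)P₁P₂) + P₂) / (1 + b²αP₁) ) lies in C^{T₁}_{GIFC}. -/
open scoped BigOperators
open MeasureTheory ProbabilityTheory

noncomputable section

/-- The law of `n` i.i.d. standard Gaussian noise samples. -/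
def stdGaussN (n : ℕ) : Measure (Fin n → ℝ) :=
  Measure.pi fun _ => gaussianReal 0 1

/-- Average probability that receiver 1 errs, for a code for the Gaussian IFC
`Y₁ = X₁ + a X₂ + Z₁`, `Y₂ = b X₁ + X₂ + Z₂` with degraded message sets
(transmitter 1 knows both messages), messages uniform and independent. -/
def peG1T1 (a : ℝ) (n M1 M2 : ℕ) (f1 : Fin M1 → Fin M2 → Fin n → ℝ)
    (f2 : Fin M2 → Fin n → ℝ) (g1 : (Fin n → ℝ) → Fin M1) : ℝ :=
  (1 / (M1 * M2) : ℝ) * ∑ w1 : Fin M1, ∑ w2 : Fin M2,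
    (stdGaussN n {z | g1 (fun i => f1 w1 w2 i + a * f2 w2 i + z i) ≠ w1}).toReal

/-- Average probability that receiver 2 errs (transmitter 1 informed). -/
def peG2T1 (b : ℝ) (n M1 M2 : ℕ) (f1 : Fin M1 → Fin M2 → Fin n → ℝ)
    (f2 : Fin M2 → Fin n → ℝ) (g2 : (Fin n → ℝ) → Fin M2) : ℝ :=
  (1 / (M1 * M2) : ℝ) * ∑ w1 : Fin M1, ∑ w2 : Fin M2,
    (stdGaussN n {z | g2 (fun i => b * f1 w1 w2 i + f2 w2 i + z i) ≠ w2}).toReal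

/-- A rate pair is achievable for the Gaussian IFC with degraded message sets
(transmitter 1 knows both messages) under the average power constraints `P1`, `P2`. -/
def AchievableGT1 (a b P1 P2 R1 R2 : ℝ) : Prop :=
  ∀ ε : ℝ, 0 < ε → ∃ (n M1 M2 : ℕ) (f1 : Fin M1 → Fin M2 → Fin n → ℝ)
    (f2 : Fin M2 → Fin n → ℝ) (g1 : (Fin n → ℝ) → Fin M1) (g2 : (Fin n → ℝ) → Fin M2),
    0 < n ∧ 0 < M1 ∧ 0 < M2 ∧
    (1 / (M1 * M2) : ℝ) * ∑ w1 : Fin M1, ∑ w2 : Fin M2,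
      ((1 / n : ℝ) * ∑ i, (f1 w1 w2 i) ^ 2) ≤ P1 ∧
    (1 / M2 : ℝ) * ∑ w2 : Fin M2, ((1 / n : ℝ) * ∑ i, (f2 w2 i) ^ 2) ≤ P2 ∧
    R1 - ε ≤ Real.logb 2 M1 / n ∧ R2 - ε ≤ Real.logb 2 M2 / n ∧
    peG1T1 a n M1 M2 f1 f2 g1 ≤ ε ∧ peG2T1 b n M1 M2 f1 f2 g2 ≤ ε

/-- The capacity region `C^{T₁}_{GIFC}` of the Gaussian IFC with degraded message sets
in which transmitter 1 knows both messages. -/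
def CapacityGT1 (a b P1 P2 : ℝ) : Set (ℝ × ℝ) :=
  closure {R : ℝ × ℝ | AchievableGT1 a b P1 P2 R.1 R.2}

open scoped ENNReal NNReal

lemma lint_pi_one {ι X : Type*} [Fintype ι] [MeasurableSpace X] (μ : Measure X)
    [IsProbabilityMeasure μ] (i : ι) (F : X → ℝ≥0∞) (hF : Measurable F) :
    ∫⁻ x, F (x i) ∂(Measure.pi fun _ : ι => μ) = ∫⁻ a, F a ∂μ :=
  (measurePreserving_eval (fun _ : ι => μ) i).lintegral_comp hF

lemma lint_pi_two {ι X : Type*} [Fintype ι] [MeasurableSpace X] (μ : Measure X)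
    [IsProbabilityMeasure μ] {i j : ι} (hij : i ≠ j) (F : X → X → ℝ≥0∞)
    (hF : Measurable (Function.uncurry F)) :
    ∫⁻ x, F (x i) (x j) ∂(Measure.pi fun _ : ι => μ) = ∫⁻ a, ∫⁻ b, F a b ∂μ ∂μ := by
  have hind : IndepFun (fun x : ι → X => x i) (fun x : ι → X => x j)
      (Measure.pi fun _ : ι => μ) :=
    (iIndepFun_pi (μ := fun _ : ι => μ) (X := fun _ x => x)
      (fun i => aemeasurable_id)).indepFun hij
  have hm := (indepFun_iff_map_prod_eq_prod_map_map (measurable_pi_apply i).aemeasurable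
    (measurable_pi_apply j).aemeasurable).1 hind
  rw [(measurePreserving_eval (fun _ : ι => μ) i).map_eq,
    (measurePreserving_eval (fun _ : ι => μ) j).map_eq] at hm
  calc ∫⁻ x, F (x i) (x j) ∂(Measure.pi fun _ : ι => μ)
      = ∫⁻ p, Function.uncurry F p ∂((Measure.pi fun _ : ι => μ).map fun x => (x i, x j)) := by
        rw [lintegral_map hF (by fun_prop)]; rfl
    _ = _ := by
        rw [hm, lintegral_prod _ hF.aemeasurable]; rfl

lemma conc_pi {X : Type*} [MeasurableSpace X] (μ : Measure X)
    [IsProbabilityMeasure μ] (φ : X → ℝ) (hφ : MemLp φ 2 μ) (n : ℕ) (hn : 0 < n) (δ : ℝ)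
    (hδ : 0 < δ) :
    (Measure.pi fun _ : Fin n => μ) {x | n * δ ≤ |∑ i, φ (x i) - n * ∫ a, φ a ∂μ|} ≤
      ENNReal.ofReal (variance φ μ / (n * δ ^ 2)) := by
  have hL : ∀ i : Fin n, MemLp (fun x : Fin n → X => φ (x i)) 2 (Measure.pi fun _ : Fin n => μ) :=
    fun i => hφ.comp_measurePreserving (measurePreserving_eval (fun _ : Fin n => μ) i)
  have hS : MemLp (∑ i, fun x : Fin n → X => φ (x i)) 2 (Measure.pi fun _ : Fin n => μ) :=
    memLp_finsetSum' _ fun i _ => hL i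
  have hn' : (0:ℝ) < n := by exact_mod_cast hn
  have h := meas_ge_le_variance_div_sq hS (c := n * δ) (by positivity)
  have hv := variance_sum_pi (μ := fun _ : Fin n => μ) (X := fun _ => φ) (fun _ => hφ)
  have hE : ∫ x, (∑ i, fun x : Fin n → X => φ (x i)) x ∂(Measure.pi fun _ : Fin n => μ)
      = n * ∫ a, φ a ∂μ := by
    simp only [Finset.sum_apply]
    rw [integral_finsetSum _ fun i _ => (hL i).integrable (by norm_num)]
    have : ∀ i : Fin n, ∫ x, φ (x i) ∂(Measure.pi fun _ : Fin n => μ) = ∫ a, φ a ∂μ := by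
      intro i
      have hm := (measurePreserving_eval (fun _ : Fin n => μ) i)
      rw [← hm.map_eq, integral_map (measurable_pi_apply i).aemeasurable (by rw [hm.map_eq]; exact hφ.1)]
      simp [Function.eval, hm.map_eq]
    simp [this]
  rw [hv, hE] at h
  simp only [Finset.sum_apply] at h
  refine h.trans (le_of_eq ?_)
  congr 1
  simp
  field_simp

lemma cheb_cover {X : Type*} [MeasurableSpace X] (μ : Measure X)
    [IsProbabilityMeasure μ] (f : X → ℝ≥0∞) (hf : Measurable f) (τ : ℝ) (hτ : 0 ≤ τ)
    (h1 : ∫⁻ a, f a ∂μ = 1) (L : ℕ) (hL : 0 < L) :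
    (Measure.pi fun _ : Fin L => μ) {c | 2 * ∑ l, f (c l) < L} ≤
      ENNReal.ofReal (16 * τ / L) +
        4 * ∫⁻ a, f a * {a | ENNReal.ofReal τ < f a}.indicator 1 a ∂μ := by
  set S : Set X := {a | ENNReal.ofReal τ < f a} with hS
  have hSm : MeasurableSet S := measurableSet_lt measurable_const hf
  set g : X → ℝ := fun a => (f a * Sᶜ.indicator 1 a).toReal with hg
  have hgm : Measurable g := by
    have : Measurable (Sᶜ.indicator (1 : X → ℝ≥0∞)) := measurable_one.indicator hSm.compl
    fun_prop
  have hg0 : ∀ a, 0 ≤ g a := fun a => ENNReal.toReal_nonneg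
  have hfin : ∀ a, f a * Sᶜ.indicator 1 a ≤ ENNReal.ofReal τ := by
    intro a
    by_cases ha : a ∈ S
    · simp [ha]
    · simpa [ha] using (not_lt.1 ha : f a ≤ _)
  have hgτ : ∀ a, g a ≤ τ := fun a =>
    ENNReal.toReal_le_of_le_ofReal hτ (hfin a)
  have hgmem : MemLp g 2 μ :=
    MemLp.of_bound hgm.aestronglyMeasurable τ (by
      filter_upwards with a; rw [Real.norm_of_nonneg (hg0 a)]; exact hgτ a)
  have hgof : ∀ a, ENNReal.ofReal (g a) = f a * Sᶜ.indicator 1 a := fun a =>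
    ENNReal.ofReal_toReal ((hfin a).trans_lt ENNReal.ofReal_lt_top).ne
  have hgint : ENNReal.ofReal (∫ a, g a ∂μ) = ∫⁻ a, f a * Sᶜ.indicator 1 a ∂μ := by
    rw [ofReal_integral_eq_lintegral_ofReal (hgmem.integrable (by norm_num))
      (Filter.Eventually.of_forall hg0)]
    simp [hgof]
  have hsplit : ∫⁻ a, f a * Sᶜ.indicator 1 a ∂μ + ∫⁻ a, f a * S.indicator 1 a ∂μ = 1 := by
    rw [← lintegral_add_left, ← h1]
    · refine lintegral_congr fun a => ?_
      by_cases ha : a ∈ S <;> simp [ha]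
    · exact hf.mul (measurable_one.indicator hSm.compl)
  have hgle1 : ∫ a, g a ∂μ ≤ 1 := by
    have : ENNReal.ofReal (∫ a, g a ∂μ) ≤ 1 := by
      rw [hgint, ← hsplit]; exact le_self_add
    simpa using ENNReal.ofReal_le_one.1 this
  by_cases hp : (3/4 : ℝ) ≤ ∫ a, g a ∂μ
  · refine le_trans ?_ le_self_add
    have hc := conc_pi μ g hgmem L hL (1/4) (by norm_num)
    have hL' : (0:ℝ) < L := by exact_mod_cast hL
    have hvar : variance g μ ≤ τ := by
      refine (variance_le_expectation_sq hgm.aestronglyMeasurable).trans ?_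
      calc ∫ a, (g^2) a ∂μ ≤ ∫ a, τ * g a ∂μ := by
            refine integral_mono hgmem.integrable_sq
              ((hgmem.integrable (by norm_num)).const_mul τ) fun a => ?_
            simp only [Pi.pow_apply]
            nlinarith [hg0 a, hgτ a]
        _ ≤ τ := by rw [integral_const_mul]; nlinarith
    refine (measure_mono ?_).trans (hc.trans (ENNReal.ofReal_le_ofReal ?_))
    · intro c hcc
      simp only [Set.mem_ofPred_eq] at hcc ⊢
      have h2 : ENNReal.ofReal (2 * ∑ l, g (c l)) < ENNReal.ofReal L := by
        refine lt_of_le_of_lt ?_ (hcc.trans_eq (by simp))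
        rw [ENNReal.ofReal_mul (by norm_num), ENNReal.ofReal_sum_of_nonneg fun i _ => hg0 _]
        simp only [hgof]
        norm_num
        gcongr with l
        by_cases ha : c l ∈ S <;> simp [ha]
      have h3 := (ENNReal.ofReal_lt_ofReal_iff hL').1 h2
      rw [abs_sub_comm]
      refine le_trans ?_ (le_abs_self _)
      nlinarith
    · rw [div_le_div_iff₀ (by positivity) (by positivity)]
      nlinarith
  · refine le_trans prob_le_one (le_trans ?_ le_add_self)
    push Not at hp
    by_contra hcon
    push Not at hcon
    set J := ∫⁻ a, f a * S.indicator 1 a ∂μ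
    have hJ1 : J ≤ 1 := by rw [← hsplit]; exact le_add_self
    have hJt : J ≠ ∞ := (hJ1.trans_lt ENNReal.one_lt_top).ne
    rw [← hgint] at hsplit
    have e1 := congrArg ENNReal.toReal hsplit
    rw [ENNReal.toReal_add ENNReal.ofReal_ne_top hJt,
      ENNReal.toReal_ofReal (integral_nonneg hg0)] at e1
    have e2 := (ENNReal.toReal_lt_toReal (by finiteness) (by simp)).2 hcon
    simp at e2 e1
    linarith

def errB {U V : Type*} {M1 M2 L : ℕ} (G : U → V → ℝ≥0∞) (H1 : U → U → V → ℝ≥0∞)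
    (H2 : V → U → V → ℝ≥0∞) (c : Fin M1 → Fin L → U) (d : Fin M2 → V)
    (w1 : Fin M1) (w2 : Fin M2) (l : Fin L) : ℝ≥0∞ :=
  G (c w1 l) (d w2) + ∑ w ∈ Finset.univ.erase w1, ∑ l', H1 (c w l') (c w1 l) (d w2)
    + ∑ w ∈ Finset.univ.erase w2, H2 (d w) (c w1 l) (d w2)

section oneshot
variable {U V : Type*} [MeasurableSpace U] [MeasurableSpace V] (μU : Measure U) (μV : Measure V)
  [IsProbabilityMeasure μU] [IsProbabilityMeasure μV]

lemma cb_red {C D : Type*} [MeasurableSpace C] [MeasurableSpace D] (μC : Measure C)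
    (μD : Measure D) [IsProbabilityMeasure μC] [IsProbabilityMeasure μD]
    {M1 M2 : ℕ} (w1 : Fin M1) (w2 : Fin M2) (F : C → D → ℝ≥0∞)
    (hF : Measurable (Function.uncurry F)) :
    ∫⁻ p, F (p.1 w1) (p.2 w2) ∂((Measure.pi fun _ : Fin M1 => μC).prod
      (Measure.pi fun _ : Fin M2 => μD)) = ∫⁻ v, ∫⁻ c, F c v ∂μC ∂μD := by
  have hFm : Measurable (fun p : (Fin M1 → C) × (Fin M2 → D) => F (p.1 w1) (p.2 w2)) :=
    hF.comp (g := Function.uncurry F) (f := fun p : (Fin M1 → C) × (Fin M2 → D) =>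
      (p.1 w1, p.2 w2)) (by fun_prop)
  rw [lintegral_prod_symm _ hFm.aemeasurable]
  have : ∀ d : Fin M2 → D, ∫⁻ c, F (c w1) (d w2) ∂(Measure.pi fun _ : Fin M1 => μC)
      = ∫⁻ c, F c (d w2) ∂μC := fun d =>
    lint_pi_one μC w1 (fun c => F c (d w2)) (hF.comp (measurable_id.prodMk measurable_const))
  simp only [this]
  exact lint_pi_one μD w2 (fun v => ∫⁻ c, F c v ∂μC) hF.lintegral_prod_left

lemma cb_red1 {C D : Type*} [MeasurableSpace C] [MeasurableSpace D] (μC : Measure C)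
    (μD : Measure D) [IsProbabilityMeasure μC] [IsProbabilityMeasure μD]
    {M1 M2 : ℕ} (w1 w1' : Fin M1) (hw : w1 ≠ w1') (w2 : Fin M2) (F : C → C → D → ℝ≥0∞)
    (hF : Measurable (fun x : C × C × D => F x.1 x.2.1 x.2.2)) :
    ∫⁻ p, F (p.1 w1) (p.1 w1') (p.2 w2) ∂((Measure.pi fun _ : Fin M1 => μC).prod
      (Measure.pi fun _ : Fin M2 => μD)) = ∫⁻ v, ∫⁻ c, ∫⁻ c', F c c' v ∂μC ∂μC ∂μD := by
  have hFm : Measurable (fun p : (Fin M1 → C) × (Fin M2 → D) =>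
      F (p.1 w1) (p.1 w1') (p.2 w2)) :=
    hF.comp (f := fun p : (Fin M1 → C) × (Fin M2 → D) =>
      (p.1 w1, p.1 w1', p.2 w2)) (by fun_prop)
  rw [lintegral_prod_symm _ hFm.aemeasurable]
  have : ∀ d : Fin M2 → D, ∫⁻ c, F (c w1) (c w1') (d w2) ∂(Measure.pi fun _ : Fin M1 => μC)
      = ∫⁻ c, ∫⁻ c', F c c' (d w2) ∂μC ∂μC := fun d =>
    lint_pi_two μC hw (fun c c' => F c c' (d w2))
      (hF.comp (f := fun x : C × C => (x.1, x.2, d w2)) (by fun_prop))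
  simp only [this]
  refine lint_pi_one μD w2 (fun v => ∫⁻ c, ∫⁻ c', F c c' v ∂μC ∂μC) ?_
  refine Measurable.lintegral_prod_right (f := fun v c => ∫⁻ c', F c c' v ∂μC) ?_
  exact Measurable.lintegral_prod_right (f := fun (x : D × C) c' => F x.2 c' x.1)
    (hF.comp (f := fun x : (D × C) × C => (x.1.2, x.2, x.1.1)) (by fun_prop))

lemma cb_red2 {C D : Type*} [MeasurableSpace C] [MeasurableSpace D] (μC : Measure C)
    (μD : Measure D) [IsProbabilityMeasure μC] [IsProbabilityMeasure μD]
    {M1 M2 : ℕ} (w1 : Fin M1) (w2 w2' : Fin M2) (hw : w2 ≠ w2') (F : C → D → D → ℝ≥0∞)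
    (hF : Measurable (fun x : C × D × D => F x.1 x.2.1 x.2.2)) :
    ∫⁻ p, F (p.1 w1) (p.2 w2) (p.2 w2') ∂((Measure.pi fun _ : Fin M1 => μC).prod
      (Measure.pi fun _ : Fin M2 => μD)) = ∫⁻ c, ∫⁻ v, ∫⁻ v', F c v v' ∂μD ∂μD ∂μC := by
  have hFm : Measurable (fun p : (Fin M1 → C) × (Fin M2 → D) =>
      F (p.1 w1) (p.2 w2) (p.2 w2')) :=
    hF.comp (f := fun p : (Fin M1 → C) × (Fin M2 → D) =>
      (p.1 w1, p.2 w2, p.2 w2')) (by fun_prop)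
  rw [lintegral_prod _ hFm.aemeasurable]
  have : ∀ c : Fin M1 → C, ∫⁻ d, F (c w1) (d w2) (d w2') ∂(Measure.pi fun _ : Fin M2 => μD)
      = ∫⁻ v, ∫⁻ v', F (c w1) v v' ∂μD ∂μD := fun c =>
    lint_pi_two μD hw (fun v v' => F (c w1) v v')
      (hF.comp (f := fun x : D × D => (c w1, x.1, x.2)) (by fun_prop))
  simp only [this]
  refine lint_pi_one μC w1 (fun c => ∫⁻ v, ∫⁻ v', F c v v' ∂μD ∂μD) ?_
  refine Measurable.lintegral_prod_right (f := fun c v => ∫⁻ c', F c v c' ∂μD) ?_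
  exact Measurable.lintegral_prod_right (f := fun (x : C × D) v' => F x.1 x.2 v')
    (hF.comp (f := fun x : (C × D) × D => (x.1.1, x.1.2, x.2)) (by fun_prop))

theorem one_shot {M1 M2 L : ℕ} (hL : 0 < L)
    (r : U → V → ℝ≥0∞) (hr : Measurable (Function.uncurry r))
    (hr1 : ∀ v, ∫⁻ u, r u v ∂μU = 1) (τ : ℝ) (hτ : 0 ≤ τ)
    (G : U → V → ℝ≥0∞) (hG : Measurable (Function.uncurry G))
    (H1 : U → U → V → ℝ≥0∞) (hH1 : Measurable (fun x : U × U × V => H1 x.1 x.2.1 x.2.2))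
    (H2 : V → U → V → ℝ≥0∞) (hH2 : Measurable (fun x : V × U × V => H2 x.1 x.2.1 x.2.2))
    (h1 h2 : ℝ≥0∞) (hH1' : ∀ u v, ∫⁻ u', H1 u' u v ∂μU ≤ h1)
    (hH2' : ∀ u v, ∫⁻ v', H2 v' u v ∂μV ≤ h2) (B : ℝ≥0∞)
    (hB : ENNReal.ofReal (16 * τ / L) +
        4 * (∫⁻ v, ∫⁻ u, r u v * {u | ENNReal.ofReal τ < r u v}.indicator 1 u ∂μU ∂μV) +
        2 * (∫⁻ v, ∫⁻ u, r u v * G u v ∂μU ∂μV + ((M1 - 1 : ℕ) : ℝ≥0∞) * L * h1 +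
          ((M2 - 1 : ℕ) : ℝ≥0∞) * h2) ≤ B) :
    ∃ (c : Fin M1 → Fin L → U) (d : Fin M2 → V) (l : Fin M1 → Fin M2 → Fin L),
      ∑ w1, ∑ w2, min (errB G H1 H2 c d w1 w2 (l w1 w2)) 1 ≤ M1 * M2 * B := by
  classical
  have : Nonempty (Fin L) := ⟨⟨0, hL⟩⟩
  have hL0 : (L : ℝ≥0∞) ≠ 0 := by exact_mod_cast hL.ne'
  have hLt : (L : ℝ≥0∞) ≠ ∞ := by simp
  set μC : Measure (Fin L → U) := Measure.pi fun _ : Fin L => μU with hμC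
  set ν : Measure ((Fin M1 → Fin L → U) × (Fin M2 → V)) :=
    (Measure.pi fun _ : Fin M1 => μC).prod (Measure.pi fun _ : Fin M2 => μV) with hν
  -- measurability
  have mr : ∀ (w1 : Fin M1) (w2 : Fin M2) (l : Fin L), Measurable
      (fun p : (Fin M1 → Fin L → U) × (Fin M2 → V) => r (p.1 w1 l) (p.2 w2)) := fun w1 w2 l =>
    hr.comp (f := fun p : (Fin M1 → Fin L → U) × (Fin M2 → V) => (p.1 w1 l, p.2 w2))
      (by fun_prop)
  have mG : ∀ (w1 : Fin M1) (w2 : Fin M2) (l : Fin L), Measurable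
      (fun p : (Fin M1 → Fin L → U) × (Fin M2 → V) => G (p.1 w1 l) (p.2 w2)) := fun w1 w2 l =>
    hG.comp (f := fun p : (Fin M1 → Fin L → U) × (Fin M2 → V) => (p.1 w1 l, p.2 w2))
      (by fun_prop)
  have mH1 : ∀ (w1 w : Fin M1) (w2 : Fin M2) (l l' : Fin L), Measurable
      (fun p : (Fin M1 → Fin L → U) × (Fin M2 → V) => H1 (p.1 w l') (p.1 w1 l) (p.2 w2)) :=
    fun w1 w w2 l l' => hH1.comp (f := fun p : (Fin M1 → Fin L → U) × (Fin M2 → V) =>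
      (p.1 w l', p.1 w1 l, p.2 w2)) (by fun_prop)
  have mH2 : ∀ (w1 : Fin M1) (w w2 : Fin M2) (l : Fin L), Measurable
      (fun p : (Fin M1 → Fin L → U) × (Fin M2 → V) => H2 (p.2 w) (p.1 w1 l) (p.2 w2)) :=
    fun w1 w w2 l => hH2.comp (f := fun p : (Fin M1 → Fin L → U) × (Fin M2 → V) =>
      (p.2 w, p.1 w1 l, p.2 w2)) (by fun_prop)
  have mS1 : ∀ (w1 : Fin M1) (w2 : Fin M2) (l : Fin L), Measurable
      (fun p : (Fin M1 → Fin L → U) × (Fin M2 → V) =>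
        ∑ w ∈ Finset.univ.erase w1, ∑ l', H1 (p.1 w l') (p.1 w1 l) (p.2 w2)) :=
    fun w1 w2 l => Finset.measurable_fun_sum _ fun w _ => Finset.measurable_fun_sum _
      fun l' _ => mH1 w1 w w2 l l'
  have mS2 : ∀ (w1 : Fin M1) (w2 : Fin M2) (l : Fin L), Measurable
      (fun p : (Fin M1 → Fin L → U) × (Fin M2 → V) =>
        ∑ w ∈ Finset.univ.erase w2, H2 (p.2 w) (p.1 w1 l) (p.2 w2)) :=
    fun w1 w2 l => Finset.measurable_fun_sum _ fun w _ => mH2 w1 w w2 l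
  have mE : ∀ (w1 : Fin M1) (w2 : Fin M2) (l : Fin L), Measurable
      (fun p : (Fin M1 → Fin L → U) × (Fin M2 → V) => errB G H1 H2 p.1 p.2 w1 w2 l) :=
    fun w1 w2 l => ((mG w1 w2 l).add (mS1 w1 w2 l)).add (mS2 w1 w2 l)
  have mrG : ∀ (w1 : Fin M1) (w2 : Fin M2) (l : Fin L), Measurable
      (fun p : (Fin M1 → Fin L → U) × (Fin M2 → V) =>
        r (p.1 w1 l) (p.2 w2) * G (p.1 w1 l) (p.2 w2)) := fun w1 w2 l =>
    (mr w1 w2 l).mul (mG w1 w2 l)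
  have mrH1 : ∀ (w1 w : Fin M1) (w2 : Fin M2) (l l' : Fin L), Measurable
      (fun p : (Fin M1 → Fin L → U) × (Fin M2 → V) =>
        r (p.1 w1 l) (p.2 w2) * H1 (p.1 w l') (p.1 w1 l) (p.2 w2)) := fun w1 w w2 l l' =>
    (mr w1 w2 l).mul (mH1 w1 w w2 l l')
  have mrS1 : ∀ (w1 : Fin M1) (w2 : Fin M2) (l : Fin L), Measurable
      (fun p : (Fin M1 → Fin L → U) × (Fin M2 → V) => ∑ w ∈ Finset.univ.erase w1, ∑ l',
        r (p.1 w1 l) (p.2 w2) * H1 (p.1 w l') (p.1 w1 l) (p.2 w2)) := fun w1 w2 l =>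
    Finset.measurable_fun_sum _ fun w _ => Finset.measurable_fun_sum _
          fun l' _ => mrH1 w1 w w2 l l'
  have mrH2 : ∀ (w1 : Fin M1) (w w2 : Fin M2) (l : Fin L), Measurable
      (fun p : (Fin M1 → Fin L → U) × (Fin M2 → V) =>
        r (p.1 w1 l) (p.2 w2) * H2 (p.2 w) (p.1 w1 l) (p.2 w2)) := fun w1 w w2 l =>
    (mr w1 w2 l).mul (mH2 w1 w w2 l)
  have mrE : ∀ (w1 : Fin M1) (w2 : Fin M2) (l : Fin L), Measurable
      (fun p : (Fin M1 → Fin L → U) × (Fin M2 → V) =>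
        r (p.1 w1 l) (p.2 w2) * errB G H1 H2 p.1 p.2 w1 w2 l) := fun w1 w2 l =>
    (mr w1 w2 l).mul (mE w1 w2 l)
  have mrSE : ∀ (w1 : Fin M1) (w2 : Fin M2), Measurable
      (fun p : (Fin M1 → Fin L → U) × (Fin M2 → V) =>
        ∑ l, r (p.1 w1 l) (p.2 w2) * errB G H1 H2 p.1 p.2 w1 w2 l) := fun w1 w2 =>
    Finset.measurable_fun_sum _ fun l _ => mrE w1 w2 l
  set EG := ∫⁻ v, ∫⁻ u, r u v * G u v ∂μU ∂μV with hEG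
  -- the expected weighted error
  have key : ∀ (w1 : Fin M1) (w2 : Fin M2) (l : Fin L),
      ∫⁻ p, r (p.1 w1 l) (p.2 w2) * errB G H1 H2 p.1 p.2 w1 w2 l ∂ν ≤
        EG + ((M1 - 1 : ℕ) : ℝ≥0∞) * L * h1 + ((M2 - 1 : ℕ) : ℝ≥0∞) * h2 := by
    intro w1 w2 l
    have hcoord : ∀ (F : U → V → ℝ≥0∞), Measurable (Function.uncurry F) →
        ∫⁻ p, F (p.1 w1 l) (p.2 w2) ∂ν = ∫⁻ v, ∫⁻ u, F u v ∂μU ∂μV := by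
      intro F hF
      rw [hν, cb_red μC μV w1 w2 (fun c v => F (c l) v)
        (hF.comp (f := fun x : (Fin L → U) × V => (x.1 l, x.2)) (by fun_prop))]
      refine lintegral_congr fun v => ?_
      exact lint_pi_one μU l (fun u => F u v) (hF.comp (measurable_id.prodMk measurable_const))
    have hone : ∫⁻ p, r (p.1 w1 l) (p.2 w2) ∂ν = 1 := by
      rw [hcoord r hr]; simp [hr1]
    have hGt : ∫⁻ p, r (p.1 w1 l) (p.2 w2) * G (p.1 w1 l) (p.2 w2) ∂ν = EG :=
      hcoord (fun u v => r u v * G u v) (hr.mul hG)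
    have hH1t : ∀ w ∈ Finset.univ.erase w1, ∀ l' : Fin L,
        ∫⁻ p, r (p.1 w1 l) (p.2 w2) * H1 (p.1 w l') (p.1 w1 l) (p.2 w2) ∂ν ≤ h1 := by
      intro w hw l'
      have hne : w1 ≠ w := (Finset.ne_of_mem_erase hw).symm
      rw [hν, cb_red1 μC μV w1 w hne w2
        (fun c c' v => r (c l) v * H1 (c' l') (c l) v)
        ((hr.comp (f := fun x : (Fin L → U) × (Fin L → U) × V => (x.1 l, x.2.2))
          (by fun_prop)).mul (hH1.comp
          (f := fun x : (Fin L → U) × (Fin L → U) × V => (x.2.1 l', x.1 l, x.2.2))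
          (by fun_prop)))]
      calc _ ≤ ∫⁻ v, ∫⁻ c, r (c l) v * h1 ∂μC ∂μV := by
            refine lintegral_mono fun v => lintegral_mono fun c => ?_
            have hm : Measurable (fun u' => H1 u' (c l) v) :=
              hH1.comp (f := fun u' : U => (u', c l, v)) (by fun_prop)
            dsimp only
            have hm' : Measurable (fun c' : Fin L → U => H1 (c' l') (c l) v) :=
              hm.comp (measurable_pi_apply l')
            rw [lintegral_const_mul _ hm']
            gcongr
            rw [lint_pi_one μU l' (fun u' => H1 u' (c l) v) hm]
            exact hH1' _ _
        _ = h1 := by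
            have : ∀ v, ∫⁻ c, r (c l) v * h1 ∂μC = h1 := by
              intro v
              have hm : Measurable (fun u => r u v) :=
                hr.comp (measurable_id.prodMk measurable_const)
              have hm' : Measurable (fun c : Fin L → U => r (c l) v) :=
                hm.comp (measurable_pi_apply l)
              rw [lintegral_mul_const _ hm',
                lint_pi_one μU l (fun u => r u v) hm, hr1, one_mul]
            simp [this]
    have hH2t : ∀ w ∈ Finset.univ.erase w2,
        ∫⁻ p, r (p.1 w1 l) (p.2 w2) * H2 (p.2 w) (p.1 w1 l) (p.2 w2) ∂ν ≤ h2 := by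
      intro w hw
      have hne : w2 ≠ w := (Finset.ne_of_mem_erase hw).symm
      rw [hν, cb_red2 μC μV w1 w2 w hne
        (fun c v v' => r (c l) v * H2 v' (c l) v)
        ((hr.comp (f := fun x : (Fin L → U) × V × V => (x.1 l, x.2.1))
          (by fun_prop)).mul (hH2.comp
          (f := fun x : (Fin L → U) × V × V => (x.2.2, x.1 l, x.2.1))
          (by fun_prop)))]
      have hrm : Measurable (fun x : (Fin L → U) × V => r (x.1 l) x.2) :=
        hr.comp (f := fun x : (Fin L → U) × V => (x.1 l, x.2)) (by fun_prop)
      calc _ ≤ ∫⁻ c, ∫⁻ v, r (c l) v * h2 ∂μV ∂μC := by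
            refine lintegral_mono fun c => lintegral_mono fun v => ?_
            have hm : Measurable (fun v' => H2 v' (c l) v) :=
              hH2.comp (f := fun v' : V => (v', c l, v)) (by fun_prop)
            dsimp only
            rw [lintegral_const_mul _ hm]
            gcongr
            exact hH2' _ _
        _ = ∫⁻ v, ∫⁻ c, r (c l) v * h2 ∂μC ∂μV := by
            rw [lintegral_lintegral_swap]
            exact (hrm.mul_const h2).aemeasurable
        _ = h2 := by
            have : ∀ v, ∫⁻ c, r (c l) v * h2 ∂μC = h2 := by
              intro v
              have hm : Measurable (fun u => r u v) :=
                hr.comp (measurable_id.prodMk measurable_const)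
              have hm' : Measurable (fun c : Fin L → U => r (c l) v) :=
                hm.comp (measurable_pi_apply l)
              rw [lintegral_mul_const _ hm',
                lint_pi_one μU l (fun u => r u v) hm, hr1, one_mul]
            simp [this]
    unfold errB
    simp only [mul_add, Finset.mul_sum]
    rw [lintegral_add_left (by exact (mrG w1 w2 l).add (mrS1 w1 w2 l)),
      lintegral_add_left (mrG w1 w2 l), hGt,
      lintegral_finsetSum _ (fun w _ => Finset.measurable_fun_sum _
          fun l' _ => mrH1 w1 w w2 l l'),
      lintegral_finsetSum _ (fun w _ => mrH2 w1 w w2 l)]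
    gcongr
    · calc _ ≤ ∑ w ∈ Finset.univ.erase w1, ∑ l' : Fin L, h1 := by
            refine Finset.sum_le_sum fun w hw => ?_
            rw [lintegral_finsetSum _ (fun l' _ => mrH1 w1 w w2 l l')]
            exact Finset.sum_le_sum fun l' _ => hH1t w hw l'
        _ = _ := by simp [mul_assoc]
    · calc _ ≤ ∑ w ∈ Finset.univ.erase w2, h2 := Finset.sum_le_sum hH2t
        _ = _ := by simp
  -- pointwise bound
  have cover : ∀ (w1 : Fin M1) (w2 : Fin M2),
      ∫⁻ p : (Fin M1 → Fin L → U) × (Fin M2 → V),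
        {p | 2 * ∑ l, r (p.1 w1 l) (p.2 w2) < L}.indicator 1 p ∂ν ≤
      ENNReal.ofReal (16 * τ / L) +
        4 * (∫⁻ v, ∫⁻ u, r u v * {u | ENNReal.ofReal τ < r u v}.indicator 1 u ∂μU ∂μV) := by
    intro w1 w2
    set T : Set ((Fin L → U) × V) := {x | 2 * ∑ l, r (x.1 l) x.2 < L} with hT
    have hTm : MeasurableSet T := by
      refine measurableSet_lt ?_ measurable_const
      refine Measurable.const_mul (Finset.measurable_fun_sum _ fun l _ => ?_) _
      exact hr.comp (f := fun x : (Fin L → U) × V => (x.1 l, x.2)) (by fun_prop)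
    have e1 := cb_red μC μV w1 w2 (fun c v => T.indicator (1 : (Fin L → U) × V → ℝ≥0∞) (c, v))
      (measurable_one.indicator hTm)
    have e2 : ∫⁻ p : (Fin M1 → Fin L → U) × (Fin M2 → V),
        {p | 2 * ∑ l, r (p.1 w1 l) (p.2 w2) < L}.indicator 1 p ∂ν =
        ∫⁻ p, T.indicator (1 : (Fin L → U) × V → ℝ≥0∞) (p.1 w1, p.2 w2) ∂ν := rfl
    rw [e2, hν, e1]
    calc _ ≤ ∫⁻ v, (ENNReal.ofReal (16 * τ / L) +
          4 * (∫⁻ u, r u v * {u | ENNReal.ofReal τ < r u v}.indicator 1 u ∂μU)) ∂μV := by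
          refine lintegral_mono fun v => ?_
          have := cheb_cover μU (fun u => r u v)
            (hr.comp (measurable_id.prodMk measurable_const)) τ hτ (hr1 v) L hL
          refine le_trans (le_of_eq ?_) this
          rw [← lintegral_indicator_one]
          · rfl
          · exact measurable_id.prodMk measurable_const hTm
      _ = _ := by
          rw [lintegral_add_left measurable_const, lintegral_const_mul]
          · simp
          · refine Measurable.lintegral_prod_left
              (f := fun u v => r u v * {u | ENNReal.ofReal τ < r u v}.indicator 1 u) ?_
            have hs : MeasurableSet {x : U × V | ENNReal.ofReal τ < r x.1 x.2} :=
              measurableSet_lt measurable_const hr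
            exact hr.mul (measurable_one.indicator hs)
  have hpt : ∀ (w1 : Fin M1) (w2 : Fin M2) (p : (Fin M1 → Fin L → U) × (Fin M2 → V)),
      (⨅ l, min (errB G H1 H2 p.1 p.2 w1 w2 l) 1) ≤
        {p : (Fin M1 → Fin L → U) × (Fin M2 → V) |
          2 * ∑ l, r (p.1 w1 l) (p.2 w2) < L}.indicator 1 p +
        2 * (L : ℝ≥0∞)⁻¹ * ∑ l, r (p.1 w1 l) (p.2 w2) * errB G H1 H2 p.1 p.2 w1 w2 l := by
    intro w1 w2 p
    set m := (⨅ l, min (errB G H1 H2 p.1 p.2 w1 w2 l) 1) with hm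
    by_cases hp : 2 * ∑ l, r (p.1 w1 l) (p.2 w2) < L
    · rw [Set.indicator_of_mem (by exact hp)]
      refine le_trans ?_ le_self_add
      exact (iInf_le _ (Classical.arbitrary (Fin L))).trans (min_le_right _ _)
    · refine le_trans ?_ le_add_self
      push Not at hp
      calc m = (L : ℝ≥0∞)⁻¹ * (L * m) := by
            rw [← mul_assoc, ENNReal.inv_mul_cancel hL0 hLt, one_mul]
        _ ≤ (L : ℝ≥0∞)⁻¹ * ((2 * ∑ l, r (p.1 w1 l) (p.2 w2)) * m) := by gcongr
        _ = 2 * (L : ℝ≥0∞)⁻¹ * ∑ l, r (p.1 w1 l) (p.2 w2) * m := by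
            rw [← Finset.sum_mul]; ring
        _ ≤ _ := by
            gcongr with l
            exact (iInf_le _ l).trans (min_le_left _ _)
  have hpair : ∀ (w1 : Fin M1) (w2 : Fin M2),
      ∫⁻ p, (⨅ l, min (errB G H1 H2 p.1 p.2 w1 w2 l) 1) ∂ν ≤ B := by
    intro w1 w2
    refine (lintegral_mono (hpt w1 w2)).trans (le_trans ?_ hB)
    rw [lintegral_add_right _ ((mrSE w1 w2).const_mul _)]
    refine add_le_add (cover w1 w2) ?_
    rw [lintegral_const_mul _ (mrSE w1 w2),
      lintegral_finsetSum _ (fun l _ => mrE w1 w2 l)]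
    calc _ ≤ 2 * (L : ℝ≥0∞)⁻¹ * ∑ l : Fin L, (EG + ((M1 - 1 : ℕ) : ℝ≥0∞) * L * h1 +
            ((M2 - 1 : ℕ) : ℝ≥0∞) * h2) := by
          gcongr with l
          exact key w1 w2 l
      _ = _ := by
          rw [Finset.sum_const, Finset.card_univ, Fintype.card_fin, nsmul_eq_mul, ← mul_assoc,
            mul_assoc 2, ENNReal.inv_mul_cancel hL0 hLt, mul_one]
  have mM : ∀ (w1 : Fin M1) (w2 : Fin M2), Measurable
      (fun p : (Fin M1 → Fin L → U) × (Fin M2 → V) =>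
        (⨅ l, min (errB G H1 H2 p.1 p.2 w1 w2 l) 1)) := fun w1 w2 =>
    Measurable.iInf fun l => (mE w1 w2 l).min measurable_const
  have mT : Measurable (fun p : (Fin M1 → Fin L → U) × (Fin M2 → V) =>
      ∑ w1, ∑ w2, (⨅ l, min (errB G H1 H2 p.1 p.2 w1 w2 l) 1)) :=
    Finset.measurable_fun_sum _ fun w1 _ => Finset.measurable_fun_sum _ fun w2 _ => mM w1 w2
  obtain ⟨p, hp⟩ := exists_le_lintegral (μ := ν) mT.aemeasurable
  have hch : ∀ (w1 : Fin M1) (w2 : Fin M2), ∃ l, min (errB G H1 H2 p.1 p.2 w1 w2 l) 1 =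
      ⨅ l, min (errB G H1 H2 p.1 p.2 w1 w2 l) 1 := fun w1 w2 => exists_eq_ciInf_of_finite
  choose l hl using hch
  refine ⟨p.1, p.2, l, ?_⟩
  simp only [hl]
  refine hp.trans ?_
  rw [lintegral_finsetSum _ (fun w1 _ => Finset.measurable_fun_sum _ fun w2 _ => mM w1 w2)]
  calc _ ≤ ∑ w1 : Fin M1, ∑ w2 : Fin M2, B := by
        refine Finset.sum_le_sum fun w1 _ => ?_
        rw [lintegral_finsetSum _ (fun w2 _ => mM w1 w2)]
        exact Finset.sum_le_sum fun w2 _ => hpair w1 w2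
    _ = _ := by simp [mul_assoc]
end oneshot

/-- log-density of `N(m,w)` with respect to `N(0,B)`. -/
def ell (B w m x : ℝ) : ℝ := (1 / 2) * Real.log (B / w) - (x - m) ^ 2 / (2 * w) + x ^ 2 / (2 * B)

def rho {n : ℕ} (B w : ℝ) (m x : Fin n → ℝ) : ℝ≥0∞ :=
  ENNReal.ofReal (Real.exp (∑ i, ell B w (m i) (x i)))

lemma gauss_wd (B w : ℝ≥0) (hB : B ≠ 0) (hw : w ≠ 0) (m : ℝ) :
    (gaussianReal 0 B).withDensity (fun x => ENNReal.ofReal (Real.exp (ell B w m x))) =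
      gaussianReal m w := by
  rw [gaussianReal_of_var_ne_zero _ hB, gaussianReal_of_var_ne_zero _ hw, ← withDensity_mul]
  · congr 1
    funext x
    simp only [Pi.mul_apply, gaussianPDF]
    rw [← ENNReal.ofReal_mul (gaussianPDFReal_nonneg _ _ _)]
    congr 1
    have hB' : (0:ℝ) < B := by positivity
    have hw' : (0:ℝ) < w := by positivity
    have hs : Real.exp ((1 / 2) * Real.log (B / w)) = √B / √w := by
      rw [← Real.sqrt_div hB'.le, Real.sqrt_eq_rpow, Real.rpow_def_of_pos (by positivity)]
      congr 1; ring
    have hsB : √(2 * Real.pi * (B:ℝ)) = √(2 * Real.pi) * √(B:ℝ) := Real.sqrt_mul (by positivity) _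
    have hsw : √(2 * Real.pi * (w:ℝ)) = √(2 * Real.pi) * √(w:ℝ) := Real.sqrt_mul (by positivity) _
    unfold gaussianPDFReal ell
    rw [show (1 / 2) * Real.log (B / w) - (x - m) ^ 2 / (2 * (w:ℝ)) + x ^ 2 / (2 * (B:ℝ)) =
      (1 / 2) * Real.log (B / w) + (-(x - m) ^ 2 / (2 * (w:ℝ)) + x ^ 2 / (2 * (B:ℝ))) by ring,
      Real.exp_add, hs, Real.exp_add, hsB, hsw]
    have he : Real.exp (-(x - 0) ^ 2 / (2 * (B:ℝ))) * Real.exp (x ^ 2 / (2 * (B:ℝ))) = 1 := by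
      rw [← Real.exp_add]; simp [neg_div]
    have h1 : √(2 * Real.pi) ≠ 0 := by positivity
    have h2 : √(B:ℝ) ≠ 0 := by positivity
    have h3 : √(w:ℝ) ≠ 0 := by positivity
    calc _ = (√(2 * Real.pi) * √(w:ℝ))⁻¹ * Real.exp (-(x - m) ^ 2 / (2 * (w:ℝ))) *
          (Real.exp (-(x - 0) ^ 2 / (2 * (B:ℝ))) * Real.exp (x ^ 2 / (2 * (B:ℝ)))) := by
          field_simp
      _ = _ := by rw [he, mul_one]
  · exact measurable_gaussianPDF _ _
  · unfold ell; fun_prop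

lemma pi_gauss_wd {n : ℕ} (B w : ℝ≥0) (hB : B ≠ 0) (hw : w ≠ 0) (m : Fin n → ℝ) :
    (Measure.pi fun _ : Fin n => gaussianReal 0 B).withDensity (rho B w m) =
      Measure.pi fun i => gaussianReal (m i) w := by
  symm
  refine Measure.pi_eq fun s hs => ?_
  rw [withDensity_apply _ (MeasurableSet.univ_pi hs), ← lintegral_indicator
    (MeasurableSet.univ_pi hs)]
  have mell : ∀ i, Measurable (fun x => ENNReal.ofReal (Real.exp (ell B w (m i) x))) := by
    intro i; unfold ell; fun_prop
  set X : Fin n → ℝ → ℝ≥0∞ := fun i => (s i).indicator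
    (fun x => ENNReal.ofReal (Real.exp (ell B w (m i) x))) with hX
  have mX : ∀ i, Measurable (X i) := fun i => (mell i).indicator (hs i)
  have h1 : ∀ x : Fin n → ℝ, (Set.univ.pi s).indicator (rho B w m) x = ∏ i, X i (x i) := by
    intro x
    by_cases hx : x ∈ Set.univ.pi s
    · rw [Set.indicator_of_mem hx]
      unfold rho
      rw [Real.exp_sum, ENNReal.ofReal_prod_of_nonneg fun i _ => (Real.exp_pos _).le]
      refine Finset.prod_congr rfl fun i _ => ?_
      rw [hX]; simp only
      rw [Set.indicator_of_mem (hx i (Set.mem_univ i))]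
    · rw [Set.indicator_of_notMem hx]
      simp only [Set.mem_univ_pi, not_forall] at hx
      obtain ⟨i, hi⟩ := hx
      exact (Finset.prod_eq_zero (Finset.mem_univ i) (Set.indicator_of_notMem hi _)).symm
  simp only [h1]
  rw [lintegral_prod_eq_prod_lintegral_of_indepFun Finset.univ
    (fun i (x : Fin n → ℝ) => X i (x i))
    (iIndepFun_pi fun i => (mX i).aemeasurable) (fun i => (mX i).comp (measurable_pi_apply i))]
  refine Finset.prod_congr rfl fun i _ => ?_
  rw [lint_pi_one _ i (X i) (mX i), hX]
  simp only
  rw [lintegral_indicator (hs i), ← withDensity_apply _ (hs i), gauss_wd B w hB hw]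

lemma measurable_rho {n : ℕ} (B w : ℝ) :
    Measurable (fun x : (Fin n → ℝ) × (Fin n → ℝ) => rho B w x.1 x.2) := by
  unfold rho ell; fun_prop

lemma measurable_rho' {n : ℕ} (B w : ℝ) (m : Fin n → ℝ) :
    Measurable (fun u : Fin n → ℝ => rho B w m u) := by
  unfold rho ell; fun_prop

lemma lint_rho {n : ℕ} (B w : ℝ≥0) (hB : B ≠ 0) (hw : w ≠ 0) (m : Fin n → ℝ)
    (F : (Fin n → ℝ) → ℝ≥0∞) (hF : Measurable F) :
    ∫⁻ u, rho B w m u * F u ∂(Measure.pi fun _ : Fin n => gaussianReal 0 B) =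
      ∫⁻ u, F u ∂(Measure.pi fun i => gaussianReal (m i) w) := by
  rw [← pi_gauss_wd B w hB hw m, lintegral_withDensity_eq_lintegral_mul _ _ hF]
  · rfl
  · exact measurable_rho' _ _ m

lemma lint_rho_one {n : ℕ} (B w : ℝ≥0) (hB : B ≠ 0) (hw : w ≠ 0) (m : Fin n → ℝ) :
    ∫⁻ u, rho B w m u ∂(Measure.pi fun _ : Fin n => gaussianReal 0 B) = 1 := by
  have := lint_rho B w hB hw m 1 measurable_one
  simpa using this

lemma rho_markov {n : ℕ} (B w : ℝ≥0) (hB : B ≠ 0) (hw : w ≠ 0) (m : Fin n → ℝ) (γ : ℝ) :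
    (Measure.pi fun _ : Fin n => gaussianReal 0 B) {u | ENNReal.ofReal (Real.exp γ) < rho B w m u}
      ≤ ENNReal.ofReal (Real.exp (-γ)) := by
  have h := mul_meas_ge_le_lintegral₀ (μ := Measure.pi fun _ : Fin n => gaussianReal 0 B)
    (measurable_rho' B w m).aemeasurable (ENNReal.ofReal (Real.exp γ))
  rw [lint_rho_one B w hB hw] at h
  refine (measure_mono (t := {u | ENNReal.ofReal (Real.exp γ) ≤ rho B w m u})
    (fun u hu => le_of_lt (Set.mem_setOf_eq ▸ hu))).trans ?_
  rw [Real.exp_neg, ENNReal.ofReal_inv_of_pos (Real.exp_pos _), ENNReal.le_inv_iff_mul_le, mul_comm]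
  exact h

lemma lint_shift {n : ℕ} (m : Fin n → ℝ)
    (F : (Fin n → ℝ) → ℝ≥0∞) (hF : Measurable F) :
    ∫⁻ u, F u ∂(Measure.pi fun i => gaussianReal (m i) 1) =
      ∫⁻ t, F (fun i => t i + m i) ∂(stdGaussN n) := by
  have : (Measure.pi fun i => gaussianReal (m i) 1) =
      (stdGaussN n).map (fun t i => t i + m i) := by
    unfold stdGaussN
    rw [Measure.pi_map_pi (f := fun i x => x + m i) (fun i => by fun_prop)]
    congr 1
    funext i
    rw [gaussianReal_map_add_const]; simp
  rw [this, lintegral_map hF (by fun_prop)]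

instance (n : ℕ) : IsProbabilityMeasure (stdGaussN n) := by unfold stdGaussN; infer_instance

/-- quadratic polynomial in three variables -/
def quad (c0 c1 c2 c3 c4 c5 c6 : ℝ) (x : ℝ × ℝ × ℝ) : ℝ :=
  c0 + c1 * x.1 ^ 2 + c2 * x.2.1 ^ 2 + c3 * x.2.2 ^ 2 + c4 * (x.1 * x.2.1) + c5 * (x.1 * x.2.2)
    + c6 * (x.2.1 * x.2.2)

def g3 : Measure (ℝ × ℝ × ℝ) := (gaussianReal 0 1).prod ((gaussianReal 0 1).prod (gaussianReal 0 1))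

instance : IsProbabilityMeasure g3 := by unfold g3; infer_instance

lemma mp1 : MeasurePreserving (fun x : ℝ × ℝ × ℝ => x.1) g3 (gaussianReal 0 1) :=
  measurePreserving_fst
lemma mp2 : MeasurePreserving (fun x : ℝ × ℝ × ℝ => x.2.1) g3 (gaussianReal 0 1) :=
  measurePreserving_fst.comp measurePreserving_snd
lemma mp3 : MeasurePreserving (fun x : ℝ × ℝ × ℝ => x.2.2) g3 (gaussianReal 0 1) :=
  measurePreserving_snd.comp measurePreserving_snd

lemma memLp4 {f : ℝ × ℝ × ℝ → ℝ} (h : MeasurePreserving f g3 (gaussianReal 0 1)) :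
    MemLp f 4 g3 :=
  (memLp_id_gaussianReal' (μ := 0) (v := 1) 4 (by simp)).comp_measurePreserving h

instance h442 : ENNReal.HolderTriple 4 4 2 := ⟨by
  rw [← two_mul, show (4:ℝ≥0∞) = 2 * 2 by norm_num, ENNReal.mul_inv (by simp) (by simp),
    ← mul_assoc, ENNReal.mul_inv_cancel (by simp) (by simp), one_mul]⟩

lemma memLp_mul {f g : ℝ × ℝ × ℝ → ℝ} (hf : MemLp f 4 g3) (hg : MemLp g 4 g3) :
    MemLp (fun x => f x * g x) 2 g3 := hg.mul' hf

lemma memLp_sq' {f : ℝ × ℝ × ℝ → ℝ} (hf : MemLp f 4 g3) :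
    MemLp (fun x => f x ^ 2) 2 g3 := by
  simp only [pow_two]; exact memLp_mul hf hf

lemma quad_memLp (c0 c1 c2 c3 c4 c5 c6 : ℝ) : MemLp (quad c0 c1 c2 c3 c4 c5 c6) 2 g3 := by
  have h1 := memLp4 mp1
  have h2 := memLp4 mp2
  have h3 := memLp4 mp3
  exact ((((((memLp_const c0).add ((memLp_sq' h1).const_mul c1)).add
    ((memLp_sq' h2).const_mul c2)).add ((memLp_sq' h3).const_mul c3)).add
    ((memLp_mul h1 h2).const_mul c4)).add ((memLp_mul h1 h3).const_mul c5)).add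
    ((memLp_mul h2 h3).const_mul c6)

lemma int_sq {f : ℝ × ℝ × ℝ → ℝ} (h : MeasurePreserving f g3 (gaussianReal 0 1)) :
    ∫ x, f x ^ 2 ∂g3 = 1 := by
  have e : ∫ y, y ^ 2 ∂(gaussianReal 0 1) = 1 := by
    have := variance_id_gaussianReal (μ := 0) (v := 1)
    rw [variance_eq_sub (memLp_id_gaussianReal' 2 (by simp))] at this
    simpa using this
  rw [← e, ← h.map_eq, integral_map h.measurable.aemeasurable (by fun_prop)]

lemma quad_int (c0 c1 c2 c3 c4 c5 c6 : ℝ) :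
    ∫ x, quad c0 c1 c2 c3 c4 c5 c6 x ∂g3 = c0 + c1 + c2 + c3 := by
  have h1 := memLp4 mp1
  have h2 := memLp4 mp2
  have h3 := memLp4 mp3
  have i1 := (memLp_sq' h1).integrable (by norm_num)
  have i2 := (memLp_sq' h2).integrable (by norm_num)
  have i3 := (memLp_sq' h3).integrable (by norm_num)
  have i4 := (memLp_mul h1 h2).integrable (by norm_num)
  have i5 := (memLp_mul h1 h3).integrable (by norm_num)
  have i6 := (memLp_mul h2 h3).integrable (by norm_num)
  have e4 : ∫ x : ℝ × ℝ × ℝ, x.1 * x.2.1 ∂g3 = 0 := by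
    unfold g3
    rw [integral_prod_mul (fun x : ℝ => x) (fun y : ℝ × ℝ => y.1)]; simp
  have e5 : ∫ x : ℝ × ℝ × ℝ, x.1 * x.2.2 ∂g3 = 0 := by
    unfold g3
    rw [integral_prod_mul (fun x : ℝ => x) (fun y : ℝ × ℝ => y.2)]; simp
  have e6 : ∫ x : ℝ × ℝ × ℝ, x.2.1 * x.2.2 ∂g3 = 0 := by
    unfold g3
    have := integral_prod_mul (μ := gaussianReal 0 1)
      (ν := (gaussianReal 0 1).prod (gaussianReal 0 1))
      (fun _ : ℝ => (1:ℝ)) (fun y : ℝ × ℝ => y.1 * y.2)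
    simp only [one_mul] at this
    rw [this, integral_prod_mul (fun x : ℝ => x) (fun y : ℝ => y)]; simp
  unfold quad
  rw [integral_add (by fun_prop) (by fun_prop), integral_add (by fun_prop) (by fun_prop),
    integral_add (by fun_prop) (by fun_prop), integral_add (by fun_prop) (by fun_prop),
    integral_add (by fun_prop) (by fun_prop), integral_add (by fun_prop) (by fun_prop)]
  simp only [integral_const_mul, int_sq mp1, int_sq mp2, int_sq mp3, e4, e5, e6]
  simp

lemma conc3 (φ : ℝ × ℝ × ℝ → ℝ) (hφ : MemLp φ 2 g3) (hm : Measurable φ) (δ : ℝ) (hδ : 0 < δ)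
    (η : ℝ≥0∞) (hη : η ≠ 0) :
    ∀ᶠ n : ℕ in Filter.atTop,
      ((stdGaussN n).prod ((stdGaussN n).prod (stdGaussN n)))
        {x | n * δ ≤ |∑ i, φ (x.1 i, x.2.1 i, x.2.2 i) - n * ∫ a, φ a ∂g3|} ≤ η := by
  have hlim : Filter.Tendsto (fun n : ℕ => ENNReal.ofReal (variance φ g3 / (n * δ ^ 2)))
      Filter.atTop (nhds 0) := by
    rw [← ENNReal.ofReal_zero]
    refine (ENNReal.continuous_ofReal.tendsto 0).comp ?_
    refine Filter.Tendsto.div_atTop tendsto_const_nhds ?_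
    exact Filter.Tendsto.atTop_mul_const (by positivity) tendsto_natCast_atTop_atTop
  filter_upwards [hlim.eventually_lt_const (pos_iff_ne_zero.2 hη), Filter.eventually_gt_atTop 0]
    with n hn hn0
  refine le_trans ?_ hn.le
  refine le_trans (le_of_eq ?_) (conc_pi g3 φ hφ n hn0 δ hδ)
  have p1 := measurePreserving_arrowProdEquivProdArrow ℝ (ℝ × ℝ) (Fin n)
    (fun _ => gaussianReal 0 1) (fun _ => (gaussianReal 0 1).prod (gaussianReal 0 1))
  have p2 := measurePreserving_arrowProdEquivProdArrow ℝ ℝ (Fin n)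
    (fun _ => gaussianReal 0 1) (fun _ => gaussianReal 0 1)
  have p3 := ((MeasurePreserving.id (stdGaussN n)).prod p2).comp p1
  have hS : MeasurableSet {x : (Fin n → ℝ) × (Fin n → ℝ) × (Fin n → ℝ) |
      n * δ ≤ |∑ i, φ (x.1 i, x.2.1 i, x.2.2 i) - n * ∫ a, φ a ∂g3|} := by
    refine measurableSet_le measurable_const ?_
    fun_prop
  exact (p3.measure_preimage hS.nullMeasurableSet).symm

lemma pe_bound {n M1 M2 : ℕ} (hM1 : 0 < M1) (hM2 : 0 < M2)
    (S : Fin M1 → Fin M2 → Set (Fin n → ℝ)) (E : Fin M1 → Fin M2 → ℝ≥0∞) (B : ℝ≥0∞) (hB : B ≠ ⊤)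
    (hS : ∀ w1 w2, stdGaussN n (S w1 w2) ≤ min (E w1 w2) 1)
    (hE : ∑ w1, ∑ w2, min (E w1 w2) 1 ≤ M1 * M2 * B) :
    (1 / (M1 * M2) : ℝ) * ∑ w1 : Fin M1, ∑ w2 : Fin M2,
      (stdGaussN n (S w1 w2)).toReal ≤ B.toReal := by
  have h1 : ∑ w1 : Fin M1, ∑ w2 : Fin M2, (stdGaussN n (S w1 w2)).toReal =
      (∑ w1 : Fin M1, ∑ w2 : Fin M2, stdGaussN n (S w1 w2)).toReal := by
    rw [ENNReal.toReal_sum fun w1 _ => (ENNReal.sum_lt_top.2 fun w2 _ => measure_lt_top _ _).ne]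
    refine Finset.sum_congr rfl fun w1 _ => ?_
    rw [ENNReal.toReal_sum fun w2 _ => measure_ne_top _ _]
  have h2 : (∑ w1 : Fin M1, ∑ w2 : Fin M2, stdGaussN n (S w1 w2)) ≤ M1 * M2 * B :=
    (Finset.sum_le_sum fun w1 _ => Finset.sum_le_sum fun w2 _ => hS w1 w2).trans hE
  have h3 := ENNReal.toReal_mono (by finiteness) h2
  rw [ENNReal.toReal_mul, ENNReal.toReal_mul, ENNReal.toReal_natCast, ENNReal.toReal_natCast] at h3
  rw [h1, one_div, inv_mul_le_iff₀ (by positivity)]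
  exact h3

/-- goodness functional -/
def Gf {n : ℕ} (a b P1 P2 : ℝ) (x1 : (Fin n → ℝ) → (Fin n → ℝ) → Fin n → ℝ)
    (x2 : (Fin n → ℝ) → Fin n → ℝ) (ρ1 ρ2 : (Fin n → ℝ) → (Fin n → ℝ) → ℝ≥0∞) (θ1 θ2 : ℝ≥0∞)
    (u v : Fin n → ℝ) : ℝ≥0∞ :=
  stdGaussN n {z | ρ1 (fun i => x1 u v i + a * x2 v i + z i) u ≤ θ1} +
  stdGaussN n {z | ρ2 (fun i => b * x1 u v i + x2 v i + z i) v ≤ θ2} +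
  ({w : (Fin n → ℝ) × (Fin n → ℝ) | n * P1 < ∑ i, x1 w.1 w.2 i ^ 2}.indicator 1 (u, v)) +
  ({w : (Fin n → ℝ) × (Fin n → ℝ) | n * P2 < ∑ i, x2 w.2 i ^ 2}.indicator 1 (u, v))

lemma code_exists (n M1 M2 L : ℕ) (hL : 0 < L) (hM1 : 0 < M1) (hM2 : 0 < M2) (a b P1 P2 : ℝ)
    (hP1 : 0 ≤ P1) (hP2 : 0 ≤ P2)
    (μU μV : Measure (Fin n → ℝ)) [IsProbabilityMeasure μU] [IsProbabilityMeasure μV]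
    (r : (Fin n → ℝ) → (Fin n → ℝ) → ℝ≥0∞) (hr : Measurable (Function.uncurry r))
    (hr1 : ∀ v, ∫⁻ u, r u v ∂μU = 1) (τ : ℝ) (hτ : 0 ≤ τ)
    (x1 : (Fin n → ℝ) → (Fin n → ℝ) → Fin n → ℝ) (hx1 : Measurable (Function.uncurry x1))
    (x2 : (Fin n → ℝ) → Fin n → ℝ) (hx2 : Measurable x2)
    (ρ1 ρ2 : (Fin n → ℝ) → (Fin n → ℝ) → ℝ≥0∞) (hρ1 : Measurable (Function.uncurry ρ1))
    (hρ2 : Measurable (Function.uncurry ρ2)) (θ1 θ2 h1 h2 : ℝ≥0∞)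
    (hh1 : ∀ y, μU {u | θ1 < ρ1 y u} ≤ h1) (hh2 : ∀ y, μV {v | θ2 < ρ2 y v} ≤ h2)
    (B : ℝ≥0∞) (hBt : B ≠ ⊤)
    (hB : ENNReal.ofReal (16 * τ / L) +
      4 * (∫⁻ v, ∫⁻ u, r u v * {u | ENNReal.ofReal τ < r u v}.indicator 1 u ∂μU ∂μV) +
      2 * (∫⁻ v, ∫⁻ u, r u v * Gf a b P1 P2 x1 x2 ρ1 ρ2 θ1 θ2 u v ∂μU ∂μV +
        ((M1 - 1 : ℕ) : ℝ≥0∞) * L * h1 + ((M2 - 1 : ℕ) : ℝ≥0∞) * h2) ≤ B) :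
    ∃ (f1 : Fin M1 → Fin M2 → Fin n → ℝ) (f2 : Fin M2 → Fin n → ℝ)
      (g1 : (Fin n → ℝ) → Fin M1) (g2 : (Fin n → ℝ) → Fin M2),
      (∀ w1 w2, ∑ i, f1 w1 w2 i ^ 2 ≤ n * P1) ∧ (∀ w2, ∑ i, f2 w2 i ^ 2 ≤ n * P2) ∧
      peG1T1 a n M1 M2 f1 f2 g1 ≤ B.toReal ∧ peG2T1 b n M1 M2 f1 f2 g2 ≤ B.toReal := by
  classical
  set G := Gf a b P1 P2 x1 x2 ρ1 ρ2 θ1 θ2 with hGdef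
  set H1 : (Fin n → ℝ) → (Fin n → ℝ) → (Fin n → ℝ) → ℝ≥0∞ := fun u' u v =>
    stdGaussN n {z | θ1 < ρ1 (fun i => x1 u v i + a * x2 v i + z i) u'} with hH1def
  set H2 : (Fin n → ℝ) → (Fin n → ℝ) → (Fin n → ℝ) → ℝ≥0∞ := fun v' u v =>
    stdGaussN n {z | θ2 < ρ2 (fun i => b * x1 u v i + x2 v i + z i) v'} with hH2def
  have mx1 : ∀ i, Measurable fun w : (Fin n → ℝ) × (Fin n → ℝ) => x1 w.1 w.2 i := fun i =>
    (measurable_pi_apply i).comp hx1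
  have mx2 : ∀ i, Measurable fun w : (Fin n → ℝ) => x2 w i := fun i =>
    (measurable_pi_apply i).comp hx2
  have my1 : Measurable fun w : (Fin n → ℝ) × (Fin n → ℝ) × (Fin n → ℝ) =>
      (fun i => x1 w.1 w.2.1 i + a * x2 w.2.1 i + w.2.2 i) := by
    refine measurable_pi_lambda _ fun i => ?_
    have e1 := (mx1 i).comp (measurable_fst.prodMk (measurable_fst.comp measurable_snd) :
      Measurable fun w : (Fin n → ℝ) × (Fin n → ℝ) × (Fin n → ℝ) => (w.1, w.2.1))
    have e2 := (mx2 i).comp (measurable_fst.comp measurable_snd :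
      Measurable fun w : (Fin n → ℝ) × (Fin n → ℝ) × (Fin n → ℝ) => w.2.1)
    exact (e1.add (e2.const_mul a)).add (by fun_prop)
  have my2 : Measurable fun w : (Fin n → ℝ) × (Fin n → ℝ) × (Fin n → ℝ) =>
      (fun i => b * x1 w.1 w.2.1 i + x2 w.2.1 i + w.2.2 i) := by
    refine measurable_pi_lambda _ fun i => ?_
    have e1 := (mx1 i).comp (measurable_fst.prodMk (measurable_fst.comp measurable_snd) :
      Measurable fun w : (Fin n → ℝ) × (Fin n → ℝ) × (Fin n → ℝ) => (w.1, w.2.1))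
    have e2 := (mx2 i).comp (measurable_fst.comp measurable_snd :
      Measurable fun w : (Fin n → ℝ) × (Fin n → ℝ) × (Fin n → ℝ) => w.2.1)
    exact ((e1.const_mul b).add e2).add (by fun_prop)
  have hG : Measurable (Function.uncurry G) := by
    have s1 : MeasurableSet {q : ((Fin n → ℝ) × (Fin n → ℝ)) × (Fin n → ℝ) |
        ρ1 (fun i => x1 q.1.1 q.1.2 i + a * x2 q.1.2 i + q.2 i) q.1.1 ≤ θ1} := by
      refine measurableSet_le ?_ measurable_const
      exact hρ1.comp ((my1.comp (by fun_prop : Measurable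
        fun q : ((Fin n → ℝ) × (Fin n → ℝ)) × (Fin n → ℝ) => (q.1.1, q.1.2, q.2))).prodMk
        (by fun_prop : Measurable
        fun q : ((Fin n → ℝ) × (Fin n → ℝ)) × (Fin n → ℝ) => q.1.1))
    have s2 : MeasurableSet {q : ((Fin n → ℝ) × (Fin n → ℝ)) × (Fin n → ℝ) |
        ρ2 (fun i => b * x1 q.1.1 q.1.2 i + x2 q.1.2 i + q.2 i) q.1.2 ≤ θ2} := by
      refine measurableSet_le ?_ measurable_const
      exact hρ2.comp ((my2.comp (by fun_prop : Measurable
        fun q : ((Fin n → ℝ) × (Fin n → ℝ)) × (Fin n → ℝ) => (q.1.1, q.1.2, q.2))).prodMk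
        (by fun_prop : Measurable
        fun q : ((Fin n → ℝ) × (Fin n → ℝ)) × (Fin n → ℝ) => q.1.2))
    have s3 : MeasurableSet {w : (Fin n → ℝ) × (Fin n → ℝ) | n * P1 < ∑ i, x1 w.1 w.2 i ^ 2} :=
      measurableSet_lt measurable_const
        (Finset.measurable_sum _ fun i _ => (mx1 i).pow_const 2)
    have s4 : MeasurableSet {w : (Fin n → ℝ) × (Fin n → ℝ) | n * P2 < ∑ i, x2 w.2 i ^ 2} :=
      measurableSet_lt measurable_const
        (Finset.measurable_sum _ fun i _ => ((mx2 i).comp measurable_snd).pow_const 2)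
    exact (((measurable_measure_prodMk_left s1).add (measurable_measure_prodMk_left s2)).add
      (measurable_one.indicator s3)).add (measurable_one.indicator s4)
  have hH1 : Measurable fun x : (Fin n → ℝ) × (Fin n → ℝ) × (Fin n → ℝ) =>
      H1 x.1 x.2.1 x.2.2 := by
    have s1 : MeasurableSet {q : ((Fin n → ℝ) × (Fin n → ℝ) × (Fin n → ℝ)) × (Fin n → ℝ) |
        θ1 < ρ1 (fun i => x1 q.1.2.1 q.1.2.2 i + a * x2 q.1.2.2 i + q.2 i) q.1.1} := by
      refine measurableSet_lt measurable_const ?_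
      exact hρ1.comp ((my1.comp (by fun_prop : Measurable
        fun q : ((Fin n → ℝ) × (Fin n → ℝ) × (Fin n → ℝ)) × (Fin n → ℝ) =>
          (q.1.2.1, q.1.2.2, q.2))).prodMk (by fun_prop : Measurable
        fun q : ((Fin n → ℝ) × (Fin n → ℝ) × (Fin n → ℝ)) × (Fin n → ℝ) => q.1.1))
    exact measurable_measure_prodMk_left s1
  have hH2 : Measurable fun x : (Fin n → ℝ) × (Fin n → ℝ) × (Fin n → ℝ) =>
      H2 x.1 x.2.1 x.2.2 := by
    have s1 : MeasurableSet {q : ((Fin n → ℝ) × (Fin n → ℝ) × (Fin n → ℝ)) × (Fin n → ℝ) |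
        θ2 < ρ2 (fun i => b * x1 q.1.2.1 q.1.2.2 i + x2 q.1.2.2 i + q.2 i) q.1.1} := by
      refine measurableSet_lt measurable_const ?_
      exact hρ2.comp ((my2.comp (by fun_prop : Measurable
        fun q : ((Fin n → ℝ) × (Fin n → ℝ) × (Fin n → ℝ)) × (Fin n → ℝ) =>
          (q.1.2.1, q.1.2.2, q.2))).prodMk (by fun_prop : Measurable
        fun q : ((Fin n → ℝ) × (Fin n → ℝ) × (Fin n → ℝ)) × (Fin n → ℝ) => q.1.1))
    exact measurable_measure_prodMk_left s1
  have hH1' : ∀ u v, ∫⁻ u', H1 u' u v ∂μU ≤ h1 := by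
    intro u v
    have s1 : MeasurableSet {q : (Fin n → ℝ) × (Fin n → ℝ) |
        θ1 < ρ1 (fun i => x1 u v i + a * x2 v i + q.2 i) q.1} := by
      refine measurableSet_lt measurable_const ?_
      exact hρ1.comp ((by fun_prop : Measurable
        fun q : (Fin n → ℝ) × (Fin n → ℝ) => (fun i => x1 u v i + a * x2 v i + q.2 i)).prodMk
          measurable_fst)
    have e := Measure.prod_apply (μ := μU) (ν := stdGaussN n) s1
    have e' := Measure.prod_apply_symm (μ := μU) (ν := stdGaussN n) s1
    calc _ = _ := e.symm
      _ = _ := e'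
      _ ≤ ∫⁻ z, h1 ∂(stdGaussN n) := lintegral_mono fun z => hh1 (fun i => x1 u v i + a * x2 v i + z i)
      _ = h1 := by simp
  have hH2' : ∀ u v, ∫⁻ v', H2 v' u v ∂μV ≤ h2 := by
    intro u v
    have s1 : MeasurableSet {q : (Fin n → ℝ) × (Fin n → ℝ) |
        θ2 < ρ2 (fun i => b * x1 u v i + x2 v i + q.2 i) q.1} := by
      refine measurableSet_lt measurable_const ?_
      exact hρ2.comp ((by fun_prop : Measurable
        fun q : (Fin n → ℝ) × (Fin n → ℝ) => (fun i => b * x1 u v i + x2 v i + q.2 i)).prodMk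
          measurable_fst)
    have e := Measure.prod_apply (μ := μV) (ν := stdGaussN n) s1
    have e' := Measure.prod_apply_symm (μ := μV) (ν := stdGaussN n) s1
    calc _ = _ := e.symm
      _ = _ := e'
      _ ≤ ∫⁻ z, h2 ∂(stdGaussN n) := lintegral_mono fun z => hh2 (fun i => b * x1 u v i + x2 v i + z i)
      _ = h2 := by simp
  obtain ⟨c, d, l, hcd⟩ := one_shot μU μV hL r hr hr1 τ hτ G hG H1 hH1 H2 hH2 h1 h2 hH1' hH2' B hB
    (M1 := M1) (M2 := M2)
  let f1 : Fin M1 → Fin M2 → Fin n → ℝ := fun w1 w2 =>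
    if n * P1 < ∑ i, x1 (c w1 (l w1 w2)) (d w2) i ^ 2 then 0 else x1 (c w1 (l w1 w2)) (d w2)
  let f2 : Fin M2 → Fin n → ℝ := fun w2 =>
    if n * P2 < ∑ i, x2 (d w2) i ^ 2 then 0 else x2 (d w2)
  let g1 : (Fin n → ℝ) → Fin M1 := fun y =>
    if h : ∃ w, ∃ l', θ1 < ρ1 y (c w l') then h.choose else ⟨0, hM1⟩
  let g2 : (Fin n → ℝ) → Fin M2 := fun y =>
    if h : ∃ w, θ2 < ρ2 y (d w) then h.choose else ⟨0, hM2⟩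
  have key : ∀ w1 w2, min (errB G H1 H2 c d w1 w2 (l w1 w2)) 1 < 1 →
      f1 w1 w2 = x1 (c w1 (l w1 w2)) (d w2) ∧ f2 w2 = x2 (d w2) := by
    intro w1 w2 hlt
    have hGlt : G (c w1 (l w1 w2)) (d w2) < 1 := by
      have : errB G H1 H2 c d w1 w2 (l w1 w2) < 1 := by
        rcases min_lt_iff.1 hlt with h | h
        · exact h
        · exact absurd h (lt_irrefl _)
      refine lt_of_le_of_lt ?_ this
      unfold errB
      exact le_self_add.trans le_self_add
    constructor
    · by_contra hne
      have hc : n * P1 < ∑ i, x1 (c w1 (l w1 w2)) (d w2) i ^ 2 := by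
        by_contra hc
        exact hne (if_neg hc)
      refine absurd hGlt (not_lt.2 ?_)
      rw [hGdef]; unfold Gf
      refine le_trans ?_ (le_self_add)
      refine le_trans ?_ (le_add_self)
      rw [Set.indicator_of_mem (by exact hc)]; rfl
    · by_contra hne
      have hc : n * P2 < ∑ i, x2 (d w2) i ^ 2 := by
        by_contra hc
        exact hne (if_neg hc)
      refine absurd hGlt (not_lt.2 ?_)
      rw [hGdef]; unfold Gf
      refine le_trans ?_ (le_add_self)
      rw [Set.indicator_of_mem (by exact hc)]; rfl
  refine ⟨f1, f2, g1, g2, ?_, ?_, ?_, ?_⟩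
  · intro w1 w2
    simp only [f1]
    split_ifs with h
    · simp; positivity
    · exact not_lt.1 h
  · intro w2
    simp only [f2]
    split_ifs with h
    · simp; positivity
    · exact not_lt.1 h
  · unfold peG1T1
    refine pe_bound hM1 hM2 _ _ B hBt (fun w1 w2 => ?_) hcd
    by_cases hlt : min (errB G H1 H2 c d w1 w2 (l w1 w2)) 1 < 1
    swap
    · exact prob_le_one.trans (not_lt.1 hlt)
    obtain ⟨k1, k2⟩ := key w1 w2 hlt
    refine le_min ?_ prob_le_one
    rw [k1, k2]
    set u := c w1 (l w1 w2)
    set v := d w2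
    have hsub : {z : Fin n → ℝ | g1 (fun i => x1 u v i + a * x2 v i + z i) ≠ w1} ⊆
        {z | ρ1 (fun i => x1 u v i + a * x2 v i + z i) u ≤ θ1} ∪
        ⋃ w ∈ Finset.univ.erase w1, ⋃ l' ∈ (Finset.univ : Finset (Fin L)),
          {z | θ1 < ρ1 (fun i => x1 u v i + a * x2 v i + z i) (c w l')} := by
      intro z hz
      by_cases hu : ρ1 (fun i => x1 u v i + a * x2 v i + z i) u ≤ θ1
      · exact Or.inl hu
      right
      have hex : ∃ w, ∃ l', θ1 < ρ1 (fun i => x1 u v i + a * x2 v i + z i) (c w l') :=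
        ⟨w1, l w1 w2, not_le.1 hu⟩
      have hg : g1 (fun i => x1 u v i + a * x2 v i + z i) = hex.choose := dif_pos hex
      obtain ⟨l', hl'⟩ := hex.choose_spec
      simp only [Set.mem_iUnion]
      refine ⟨hex.choose, ?_, l', Finset.mem_univ _, hl'⟩
      rw [Finset.mem_erase]
      refine ⟨?_, Finset.mem_univ _⟩
      rw [← hg]; exact hz
    refine (measure_mono hsub).trans ((measure_union_le _ _).trans ?_)
    unfold errB
    refine le_trans ?_ (le_self_add)
    refine add_le_add ?_ ?_
    · rw [hGdef]; unfold Gf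
      exact le_self_add.trans (le_self_add.trans le_self_add)
    · refine (measure_biUnion_finset_le _ _).trans (Finset.sum_le_sum fun w _ => ?_)
      exact (measure_biUnion_finset_le _ _)
  · unfold peG2T1
    refine pe_bound hM1 hM2 _ _ B hBt (fun w1 w2 => ?_) hcd
    by_cases hlt : min (errB G H1 H2 c d w1 w2 (l w1 w2)) 1 < 1
    swap
    · exact prob_le_one.trans (not_lt.1 hlt)
    obtain ⟨k1, k2⟩ := key w1 w2 hlt
    refine le_min ?_ prob_le_one
    rw [k1, k2]
    set u := c w1 (l w1 w2)
    set v := d w2 with hv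
    have hsub : {z : Fin n → ℝ | g2 (fun i => b * x1 u v i + x2 v i + z i) ≠ w2} ⊆
        {z | ρ2 (fun i => b * x1 u v i + x2 v i + z i) v ≤ θ2} ∪
        ⋃ w ∈ Finset.univ.erase w2,
          {z | θ2 < ρ2 (fun i => b * x1 u v i + x2 v i + z i) (d w)} := by
      intro z hz
      by_cases hu : ρ2 (fun i => b * x1 u v i + x2 v i + z i) v ≤ θ2
      · exact Or.inl hu
      right
      have hex : ∃ w, θ2 < ρ2 (fun i => b * x1 u v i + x2 v i + z i) (d w) :=
        ⟨w2, not_le.1 hu⟩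
      have hg : g2 (fun i => b * x1 u v i + x2 v i + z i) = hex.choose := dif_pos hex
      have hl' := hex.choose_spec
      simp only [Set.mem_iUnion]
      refine ⟨hex.choose, ?_, hl'⟩
      rw [Finset.mem_erase]
      refine ⟨?_, Finset.mem_univ _⟩
      rw [← hg]; exact hz
    refine (measure_mono hsub).trans ((measure_union_le _ _).trans ?_)
    unfold errB
    rw [add_right_comm]
    refine le_trans ?_ (le_self_add)
    refine add_le_add ?_ ?_
    · rw [hGdef]; unfold Gf
      exact le_add_self.trans (le_self_add.trans le_self_add)
    · exact (measure_biUnion_finset_le _ _)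

lemma quad_bad (c0 c1 c2 c3 c4 c5 c6 δ : ℝ) (hδ : 0 < δ) (η : ℝ≥0∞) (hη : η ≠ 0) :
    ∀ᶠ n : ℕ in Filter.atTop, ∀ S : (Fin n → ℝ) → (Fin n → ℝ) → (Fin n → ℝ) → Prop,
      (∀ v t z, S v t z →
        n * δ ≤ |∑ i, quad c0 c1 c2 c3 c4 c5 c6 (v i, t i, z i) - n * (c0 + c1 + c2 + c3)|) →
      ∫⁻ v, ∫⁻ t, stdGaussN n {z | S v t z} ∂(stdGaussN n) ∂(stdGaussN n) ≤ η := by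
  have mq : Measurable (quad c0 c1 c2 c3 c4 c5 c6) := by unfold quad; fun_prop
  filter_upwards [conc3 _ (quad_memLp c0 c1 c2 c3 c4 c5 c6) mq δ hδ η hη] with n hn S hS
  refine le_trans ?_ hn
  rw [quad_int]
  have hT : MeasurableSet {x : (Fin n → ℝ) × (Fin n → ℝ) × (Fin n → ℝ) |
      n * δ ≤ |∑ i, quad c0 c1 c2 c3 c4 c5 c6 (x.1 i, x.2.1 i, x.2.2 i)
        - n * (c0 + c1 + c2 + c3)|} := by
    refine measurableSet_le measurable_const ?_
    fun_prop
  rw [Measure.prod_apply hT]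
  refine lintegral_mono fun v => ?_
  rw [Measure.prod_apply (measurable_prodMk_left hT)]
  exact lintegral_mono fun t => measure_mono fun z hz => hS v t z hz

lemma lint_r {n : ℕ} (B : ℝ≥0) (hB : B ≠ 0) (κ : ℝ) (F : (Fin n → ℝ) → (Fin n → ℝ) → ℝ≥0∞)
    (hF : ∀ v, Measurable fun u => F u v) :
    ∫⁻ v, ∫⁻ u, rho B 1 (fun i => κ * v i) u * F u v
      ∂(Measure.pi fun _ : Fin n => gaussianReal 0 B) ∂(stdGaussN n) =
    ∫⁻ v, ∫⁻ t, F (fun i => t i + κ * v i) v ∂(stdGaussN n) ∂(stdGaussN n) := by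
  refine lintegral_congr fun v => ?_
  have := lint_rho B 1 hB one_ne_zero (fun i => κ * v i) (fun u => F u v) (hF v)
  rw [NNReal.coe_one] at this
  rw [this, lint_shift _ _ (hF v)]

lemma ind_eq {n : ℕ} {X : Type*} (S : Set X) (x : X) :
    S.indicator (1 : X → ℝ≥0∞) x = stdGaussN n {_z | x ∈ S} := by
  by_cases h : x ∈ S <;> simp [h]

lemma thr_lt {n : ℕ} (B w : ℝ) (m x : Fin n → ℝ) (g : ℝ) :
    ENNReal.ofReal (Real.exp g) < rho B w m x ↔ g < ∑ i, ell B w (m i) (x i) := by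
  unfold rho
  rw [ENNReal.ofReal_lt_ofReal_iff (Real.exp_pos _), Real.exp_lt_exp]

lemma thr_le {n : ℕ} (B w : ℝ) (m x : Fin n → ℝ) (g : ℝ) :
    rho B w m x ≤ ENNReal.ofReal (Real.exp g) ↔ ∑ i, ell B w (m i) (x i) ≤ g := by
  rw [← not_lt, thr_lt, not_lt]

lemma ell0 (κ : ℝ) (v t z : ℝ) : ell (1 + κ ^ 2) 1 (κ * v) (t + κ * v) =
    quad ((1 / 2) * Real.log (1 + κ ^ 2)) (κ ^ 2 / (2 * (1 + κ ^ 2)))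
      (-1 / 2 + 1 / (2 * (1 + κ ^ 2))) 0 (κ / (1 + κ ^ 2)) 0 0 (v, t, z) := by
  have : (1 + κ ^ 2) ≠ 0 := by positivity
  unfold ell quad
  rw [div_one]
  field_simp
  ring

lemma ell1 (a σ q p κ : ℝ) (hκ : κ * (1 + σ ^ 2) = σ * (q + a * p)) (v t z : ℝ) :
    ell (1 + κ ^ 2) (1 / (1 + σ ^ 2)) (σ / (1 + σ ^ 2) *
      (σ * ((t + κ * v) - κ * v) + q * v + a * (p * v) + z)) (t + κ * v) =
    quad ((1 / 2) * Real.log ((1 + κ ^ 2) / (1 / (1 + σ ^ 2)))) (κ ^ 2 / (2 * (1 + κ ^ 2)))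
      (-1 / (2 * (1 + σ ^ 2)) + 1 / (2 * (1 + κ ^ 2))) (-σ ^ 2 / (2 * (1 + σ ^ 2)))
      (κ / (1 + κ ^ 2)) 0 (σ / (1 + σ ^ 2)) (v, t, z) := by
  have h1 : (1 + κ ^ 2) ≠ 0 := by positivity
  have h2 : (1 + σ ^ 2) ≠ 0 := by positivity
  have e : (t + κ * v) - σ / (1 + σ ^ 2) *
      (σ * ((t + κ * v) - κ * v) + q * v + a * (p * v) + z) = (t - σ * z) / (1 + σ ^ 2) := by
    field_simp
    linear_combination v * hκ
  unfold ell quad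
  rw [e]
  simp only
  generalize Real.log _ = lg
  field_simp
  ring

lemma ell2 (b σ g κ q p : ℝ) (hg : g = b * q + p) (v t z : ℝ) :
    ell 1 ((1 + b ^ 2 * σ ^ 2) / (1 + b ^ 2 * σ ^ 2 + g ^ 2)) (g / (1 + b ^ 2 * σ ^ 2 + g ^ 2) *
      (b * (σ * ((t + κ * v) - κ * v) + q * v) + p * v + z)) v =
    quad ((1 / 2) * Real.log (1 / ((1 + b ^ 2 * σ ^ 2) / (1 + b ^ 2 * σ ^ 2 + g ^ 2))))
      (-(1 + b ^ 2 * σ ^ 2) / (2 * (1 + b ^ 2 * σ ^ 2 + g ^ 2)) + 1 / 2)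
      (-(g ^ 2 * b ^ 2 * σ ^ 2) / (2 * (1 + b ^ 2 * σ ^ 2) * (1 + b ^ 2 * σ ^ 2 + g ^ 2)))
      (-(g ^ 2) / (2 * (1 + b ^ 2 * σ ^ 2) * (1 + b ^ 2 * σ ^ 2 + g ^ 2)))
      (g * b * σ / (1 + b ^ 2 * σ ^ 2 + g ^ 2)) (g / (1 + b ^ 2 * σ ^ 2 + g ^ 2))
      (-(g ^ 2 * b * σ) / ((1 + b ^ 2 * σ ^ 2) * (1 + b ^ 2 * σ ^ 2 + g ^ 2))) (v, t, z) := by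
  have h1 : (1 + b ^ 2 * σ ^ 2) ≠ 0 := by positivity
  have h2 : (1 + b ^ 2 * σ ^ 2 + g ^ 2) ≠ 0 := by positivity
  have e : v - g / (1 + b ^ 2 * σ ^ 2 + g ^ 2) *
      (b * (σ * ((t + κ * v) - κ * v) + q * v) + p * v + z) =
      ((1 + b ^ 2 * σ ^ 2) * v - g * b * σ * t - g * z) / (1 + b ^ 2 * σ ^ 2 + g ^ 2) := by
    field_simp
    rw [hg]; ring
  unfold ell quad
  rw [e]
  simp only
  generalize Real.log _ = lg
  field_simp
  ring

lemma pw1 (σ q κ v t z : ℝ) : (σ * ((t + κ * v) - κ * v) + q * v) ^ 2 =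
    quad 0 (q ^ 2) (σ ^ 2) 0 (2 * σ * q) 0 0 (v, t, z) := by
  unfold quad; simp only; ring

lemma pw2 (p v t z : ℝ) : (p * v) ^ 2 =
    quad 0 (p ^ 2) 0 0 0 0 0 (v, t, z) := by
  unfold quad; simp only; ring

lemma exp_eventually (δ : ℝ) (hδ : 0 < δ) (η : ℝ) (hη : 0 < η) :
    ∀ᶠ n : ℕ in Filter.atTop, Real.exp (-(n * δ)) ≤ η := by
  have : Filter.Tendsto (fun n : ℕ => Real.exp (-(n * δ))) Filter.atTop (nhds 0) :=
    Real.tendsto_exp_neg_atTop_nhds_zero.comp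
      (Filter.Tendsto.atTop_mul_const hδ tendsto_natCast_atTop_atTop)
  filter_upwards [this.eventually_lt_const hη] with n hn using hn.le

lemma ceil_sub_one_le (x : ℝ) (hx : 0 ≤ x) : ((⌈x⌉₊ - 1 : ℕ) : ℝ) ≤ x := by
  rcases Nat.eq_zero_or_pos ⌈x⌉₊ with h | h
  · rw [h]; simpa using hx
  · rw [Nat.cast_sub h]
    have := Nat.ceil_lt_add_one hx
    push_cast
    linarith

lemma dbl_add {n : ℕ} (A C : (Fin n → ℝ) → (Fin n → ℝ) → ℝ≥0∞)
    (hA : Measurable (Function.uncurry A)) :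
    ∫⁻ v, ∫⁻ t, (A v t + C v t) ∂(stdGaussN n) ∂(stdGaussN n) =
      ∫⁻ v, ∫⁻ t, A v t ∂(stdGaussN n) ∂(stdGaussN n) +
      ∫⁻ v, ∫⁻ t, C v t ∂(stdGaussN n) ∂(stdGaussN n) := by
  have hA' : Measurable fun v => ∫⁻ t, A v t ∂(stdGaussN n) := hA.lintegral_prod_right'
  rw [← lintegral_add_left hA']
  refine lintegral_congr fun v => ?_
  exact lintegral_add_left hA.of_uncurry_left _

lemma meas_sec {n : ℕ} (f : (Fin n → ℝ) → (Fin n → ℝ) → (Fin n → ℝ) → ℝ≥0∞)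
    (hf : Measurable fun q : ((Fin n → ℝ) × (Fin n → ℝ)) × (Fin n → ℝ) => f q.1.1 q.1.2 q.2)
    (θ : ℝ≥0∞) :
    Measurable (Function.uncurry fun u v => stdGaussN n {z | f u v z ≤ θ}) :=
  measurable_measure_prodMk_left (measurableSet_le hf measurable_const :
    MeasurableSet {q : ((Fin n → ℝ) × (Fin n → ℝ)) × (Fin n → ℝ) | f q.1.1 q.1.2 q.2 ≤ θ})

lemma split4 {n : ℕ} (B : ℝ≥0) (hB : B ≠ 0) (κ : ℝ)
    (A1 A2 A3 A4 : (Fin n → ℝ) → (Fin n → ℝ) → ℝ≥0∞)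
    (h1 : Measurable (Function.uncurry A1)) (h2 : Measurable (Function.uncurry A2))
    (h3 : Measurable (Function.uncurry A3)) (h4 : Measurable (Function.uncurry A4)) :
    ∫⁻ v, ∫⁻ u, rho B 1 (fun i => κ * v i) u * (A1 u v + A2 u v + A3 u v + A4 u v)
      ∂(Measure.pi fun _ : Fin n => gaussianReal 0 B) ∂(stdGaussN n) =
    ∫⁻ v, ∫⁻ t, A1 (fun i => t i + κ * v i) v ∂(stdGaussN n) ∂(stdGaussN n) +
    ∫⁻ v, ∫⁻ t, A2 (fun i => t i + κ * v i) v ∂(stdGaussN n) ∂(stdGaussN n) +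
    ∫⁻ v, ∫⁻ t, A3 (fun i => t i + κ * v i) v ∂(stdGaussN n) ∂(stdGaussN n) +
    ∫⁻ v, ∫⁻ t, A4 (fun i => t i + κ * v i) v ∂(stdGaussN n) ∂(stdGaussN n) := by
  have sh : Measurable fun w : (Fin n → ℝ) × (Fin n → ℝ) => ((fun i => w.2 i + κ * w.1 i), w.1) := by
    fun_prop
  rw [lint_r B hB κ (fun u v => A1 u v + A2 u v + A3 u v + A4 u v)]
  · rw [dbl_add (fun v t => A1 (fun i => t i + κ * v i) v + A2 (fun i => t i + κ * v i) v +
        A3 (fun i => t i + κ * v i) v) (fun v t => A4 (fun i => t i + κ * v i) v),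
      dbl_add (fun v t => A1 (fun i => t i + κ * v i) v + A2 (fun i => t i + κ * v i) v)
        (fun v t => A3 (fun i => t i + κ * v i) v),
      dbl_add (fun v t => A1 (fun i => t i + κ * v i) v)
        (fun v t => A2 (fun i => t i + κ * v i) v)]
    · exact h1.comp sh
    · exact (h1.add h2).comp sh
    · exact ((h1.add h2).add h3).comp sh
  · intro v
    have pv : Measurable fun u : Fin n → ℝ => (u, v) := by fun_prop
    exact (((h1.add h2).add h3).add h4).comp pv

set_option maxHeartbeats 600000 in
lemma asym (a b σ q p P1 P2 δ ε : ℝ) (hP1 : 0 ≤ P1) (hP2 : 0 ≤ P2) (hδ : 0 < δ) (hε : 0 < ε)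
    (h1 : σ ^ 2 + q ^ 2 + δ ≤ P1 ∨ (σ = 0 ∧ q = 0)) (h2 : p ^ 2 + δ ≤ P2 ∨ p = 0) :
    ∀ᶠ n : ℕ in Filter.atTop, ∃ (M1 M2 : ℕ) (f1 : Fin M1 → Fin M2 → Fin n → ℝ)
      (f2 : Fin M2 → Fin n → ℝ) (g1 : (Fin n → ℝ) → Fin M1) (g2 : (Fin n → ℝ) → Fin M2),
      Real.exp (n * ((1 / 2) * Real.log (1 + σ ^ 2) - 5 * δ)) ≤ M1 ∧
      Real.exp (n * ((1 / 2) * Real.log ((1 + b ^ 2 * σ ^ 2 + (b * q + p) ^ 2) /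
        (1 + b ^ 2 * σ ^ 2)) - 2 * δ)) ≤ M2 ∧
      (∀ w1 w2, ∑ i, f1 w1 w2 i ^ 2 ≤ n * P1) ∧ (∀ w2, ∑ i, f2 w2 i ^ 2 ≤ n * P2) ∧
      peG1T1 a n M1 M2 f1 f2 g1 ≤ ε ∧ peG2T1 b n M1 M2 f1 f2 g2 ≤ ε := by
  obtain ⟨g, hg⟩ : ∃ g, g = b * q + p := ⟨_, rfl⟩
  rw [← hg]
  obtain ⟨κ, hκdef⟩ : ∃ κ, κ = σ * (q + a * p) / (1 + σ ^ 2) := ⟨_, rfl⟩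
  have hS : (0:ℝ) < 1 + σ ^ 2 := by positivity
  have hK : (0:ℝ) < 1 + κ ^ 2 := by positivity
  have hN : (0:ℝ) < 1 + b ^ 2 * σ ^ 2 := by positivity
  have hD : (0:ℝ) < 1 + b ^ 2 * σ ^ 2 + g ^ 2 := by positivity
  have hκ : κ * (1 + σ ^ 2) = σ * (q + a * p) := by rw [hκdef]; field_simp
  obtain ⟨B, hB⟩ : ∃ B : ℝ≥0, (B : ℝ) = 1 + κ ^ 2 := ⟨⟨1 + κ ^ 2, hK.le⟩, rfl⟩
  obtain ⟨W1, hW1⟩ : ∃ B : ℝ≥0, (B : ℝ) = 1 / (1 + σ ^ 2) := ⟨⟨1 / (1 + σ ^ 2), by positivity⟩, rfl⟩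
  obtain ⟨W2, hW2⟩ : ∃ B : ℝ≥0, (B : ℝ) = (1 + b ^ 2 * σ ^ 2) / (1 + b ^ 2 * σ ^ 2 + g ^ 2) :=
    ⟨⟨(1 + b ^ 2 * σ ^ 2) / (1 + b ^ 2 * σ ^ 2 + g ^ 2), by positivity⟩, rfl⟩
  have hB0 : B ≠ 0 := by rw [← NNReal.coe_ne_zero, hB]; positivity
  have hW10 : W1 ≠ 0 := by rw [← NNReal.coe_ne_zero, hW1]; positivity
  have hW20 : W2 ≠ 0 := by rw [← NNReal.coe_ne_zero, hW2]; positivity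
  set I : ℝ := (1 / 2) * Real.log (1 + κ ^ 2) with hI
  set R1 : ℝ := (1 / 2) * Real.log (1 + σ ^ 2) with hR1
  set I2 : ℝ := (1 / 2) * Real.log ((1 + b ^ 2 * σ ^ 2 + g ^ 2) / (1 + b ^ 2 * σ ^ 2)) with hI2
  have hI0 : 0 ≤ I := by
    have := Real.log_nonneg (show (1:ℝ) ≤ 1 + κ ^ 2 by nlinarith [sq_nonneg κ])
    rw [hI]; linarith
  have eI1 : (1 / 2) * Real.log ((1 + κ ^ 2) / (1 / (1 + σ ^ 2))) = I + R1 := by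
    rw [div_div_eq_mul_div, div_one, Real.log_mul hK.ne' hS.ne']; ring
  have eI2 : (1 / 2) * Real.log (1 / ((1 + b ^ 2 * σ ^ 2) / (1 + b ^ 2 * σ ^ 2 + g ^ 2))) = I2 := by
    rw [one_div_div]
  set η : ℝ≥0∞ := ENNReal.ofReal (ε / 34) with hη
  have hη0 : η ≠ 0 := by
    rw [hη, ne_eq, ENNReal.ofReal_eq_zero]; push Not; positivity
  filter_upwards [
    quad_bad ((1 / 2) * Real.log (1 + κ ^ 2)) (κ ^ 2 / (2 * (1 + κ ^ 2)))
      (-1 / 2 + 1 / (2 * (1 + κ ^ 2))) 0 (κ / (1 + κ ^ 2)) 0 0 δ hδ η hη0,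
    quad_bad ((1 / 2) * Real.log ((1 + κ ^ 2) / (1 / (1 + σ ^ 2)))) (κ ^ 2 / (2 * (1 + κ ^ 2)))
      (-1 / (2 * (1 + σ ^ 2)) + 1 / (2 * (1 + κ ^ 2))) (-σ ^ 2 / (2 * (1 + σ ^ 2)))
      (κ / (1 + κ ^ 2)) 0 (σ / (1 + σ ^ 2)) δ hδ η hη0,
    quad_bad ((1 / 2) * Real.log (1 / ((1 + b ^ 2 * σ ^ 2) / (1 + b ^ 2 * σ ^ 2 + g ^ 2))))
      (-(1 + b ^ 2 * σ ^ 2) / (2 * (1 + b ^ 2 * σ ^ 2 + g ^ 2)) + 1 / 2)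
      (-(g ^ 2 * b ^ 2 * σ ^ 2) / (2 * (1 + b ^ 2 * σ ^ 2) * (1 + b ^ 2 * σ ^ 2 + g ^ 2)))
      (-(g ^ 2) / (2 * (1 + b ^ 2 * σ ^ 2) * (1 + b ^ 2 * σ ^ 2 + g ^ 2)))
      (g * b * σ / (1 + b ^ 2 * σ ^ 2 + g ^ 2)) (g / (1 + b ^ 2 * σ ^ 2 + g ^ 2))
      (-(g ^ 2 * b * σ) / ((1 + b ^ 2 * σ ^ 2) * (1 + b ^ 2 * σ ^ 2 + g ^ 2))) δ hδ η hη0,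
    quad_bad 0 (q ^ 2) (σ ^ 2) 0 (2 * σ * q) 0 0 δ hδ η hη0,
    quad_bad 0 (p ^ 2) 0 0 0 0 0 δ hδ η hη0,
    exp_eventually δ hδ (ε / 34) (by positivity)] with n b0 b1 b2 b3 b4 hexp
  have m0 : (1 / 2) * Real.log (1 + κ ^ 2) + κ ^ 2 / (2 * (1 + κ ^ 2)) +
      (-1 / 2 + 1 / (2 * (1 + κ ^ 2))) + 0 = I := by
    rw [← hI]; field_simp; ring
  have m1 : (1 / 2) * Real.log ((1 + κ ^ 2) / (1 / (1 + σ ^ 2))) + κ ^ 2 / (2 * (1 + κ ^ 2)) +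
      (-1 / (2 * (1 + σ ^ 2)) + 1 / (2 * (1 + κ ^ 2))) + (-σ ^ 2 / (2 * (1 + σ ^ 2))) = I + R1 := by
    rw [eI1]; field_simp; ring
  have m2 : (1 / 2) * Real.log (1 / ((1 + b ^ 2 * σ ^ 2) / (1 + b ^ 2 * σ ^ 2 + g ^ 2))) +
      (-(1 + b ^ 2 * σ ^ 2) / (2 * (1 + b ^ 2 * σ ^ 2 + g ^ 2)) + 1 / 2) +
      (-(g ^ 2 * b ^ 2 * σ ^ 2) / (2 * (1 + b ^ 2 * σ ^ 2) * (1 + b ^ 2 * σ ^ 2 + g ^ 2))) +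
      (-(g ^ 2) / (2 * (1 + b ^ 2 * σ ^ 2) * (1 + b ^ 2 * σ ^ 2 + g ^ 2))) = I2 := by
    rw [eI2]; field_simp; ring
  rw [m0] at b0
  rw [m1] at b1
  rw [m2] at b2
  set τ : ℝ := Real.exp (n * (I + δ)) with hτ
  set L : ℕ := ⌈Real.exp (n * (I + 2 * δ))⌉₊ with hL
  set M1 : ℕ := ⌈Real.exp (n * (R1 - 5 * δ))⌉₊ with hM1
  set M2 : ℕ := ⌈Real.exp (n * (I2 - 2 * δ))⌉₊ with hM2
  have hLpos : 0 < L := Nat.ceil_pos.2 (Real.exp_pos _)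
  have hM1pos : 0 < M1 := Nat.ceil_pos.2 (Real.exp_pos _)
  have hM2pos : 0 < M2 := Nat.ceil_pos.2 (Real.exp_pos _)
  have hfin := code_exists n M1 M2 L hLpos hM1pos hM2pos a b P1 P2 hP1 hP2
    (Measure.pi fun _ : Fin n => gaussianReal 0 B) (stdGaussN n)
    (fun u v => rho B 1 (fun i => κ * v i) u) (by unfold rho ell; fun_prop)
    (fun v => by simpa using lint_rho_one B 1 hB0 one_ne_zero (fun i => κ * v i))
    τ (Real.exp_pos _).le
    (fun u v i => σ * (u i - κ * v i) + q * v i) (by fun_prop)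
    (fun v i => p * v i) (by fun_prop)
    (fun y u => rho B W1 (fun i => σ / (1 + σ ^ 2) * y i) u)
    (fun y v => rho 1 W2 (fun i => g / (1 + b ^ 2 * σ ^ 2 + g ^ 2) * y i) v)
    (by unfold rho ell; fun_prop) (by unfold rho ell; fun_prop)
    (ENNReal.ofReal (Real.exp (n * (I + R1 - δ)))) (ENNReal.ofReal (Real.exp (n * (I2 - δ))))
    (ENNReal.ofReal (Real.exp (-(n * (I + R1 - δ))))) (ENNReal.ofReal (Real.exp (-(n * (I2 - δ)))))
    (fun y => rho_markov B W1 hB0 hW10 _ _)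
    (fun y => by simpa [stdGaussN] using rho_markov (n := n) 1 W2 one_ne_zero hW20 _ _)
    (ENNReal.ofReal ε) (by simp) ?_
  · obtain ⟨f1, f2, g1, g2, k1, k2, k3, k4⟩ := hfin
    rw [ENNReal.toReal_ofReal hε.le] at k3 k4
    exact ⟨M1, M2, f1, f2, g1, g2, Nat.le_ceil _, Nat.le_ceil _, k1, k2, k3, k4⟩
  have A1 : Measurable (Function.uncurry fun u v : (Fin n → ℝ) => stdGaussN n {z |
      rho B W1 (fun i => σ / (1 + σ ^ 2) * (σ * (u i - κ * v i) + q * v i +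
        a * (p * v i) + z i)) u ≤ ENNReal.ofReal (Real.exp (n * (I + R1 - δ)))}) := by
    refine meas_sec _ ?_ _
    unfold rho ell; fun_prop
  have A2 : Measurable (Function.uncurry fun u v : (Fin n → ℝ) => stdGaussN n {z |
      rho 1 W2 (fun i => g / (1 + b ^ 2 * σ ^ 2 + g ^ 2) * (b * (σ * (u i - κ * v i) +
        q * v i) + p * v i + z i)) v ≤ ENNReal.ofReal (Real.exp (n * (I2 - δ)))}) := by
    refine meas_sec _ ?_ _
    unfold rho ell; fun_prop
  have A3 : Measurable (Function.uncurry fun u v : (Fin n → ℝ) =>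
      ({w : (Fin n → ℝ) × (Fin n → ℝ) | n * P1 < ∑ i, (σ * (w.1 i - κ * w.2 i) + q * w.2 i) ^ 2}.indicator
        (1 : (Fin n → ℝ) × (Fin n → ℝ) → ℝ≥0∞) (u, v))) := by
    refine measurable_one.indicator (measurableSet_lt measurable_const ?_)
    fun_prop
  have A4 : Measurable (Function.uncurry fun u v : (Fin n → ℝ) =>
      ({w : (Fin n → ℝ) × (Fin n → ℝ) | n * P2 < ∑ i, (p * w.2 i) ^ 2}.indicator
        (1 : (Fin n → ℝ) × (Fin n → ℝ) → ℝ≥0∞) (u, v))) := by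
    refine measurable_one.indicator (measurableSet_lt measurable_const ?_)
    fun_prop
  have t0 : ∫⁻ v, ∫⁻ u, rho B 1 (fun i => κ * v i) u *
      {u | ENNReal.ofReal τ < rho B 1 (fun i => κ * v i) u}.indicator 1 u
      ∂(Measure.pi fun _ : Fin n => gaussianReal 0 B) ∂(stdGaussN n) ≤ η := by
    rw [lint_r B hB0 κ (fun u v => {u | ENNReal.ofReal τ < rho B 1 (fun i => κ * v i) u}.indicator 1 u)]
    · simp_rw [ind_eq (n := n)]
      refine b0 _ fun v t z h => ?_
      rw [Set.mem_ofPred_eq, hτ, thr_lt, hB] at h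
      rw [Finset.sum_congr rfl fun i _ => ell0 κ (v i) (t i) (z i)] at h
      exact le_abs.2 (Or.inl (by linarith))
    · intro v
      exact measurable_one.indicator (measurableSet_lt measurable_const (measurable_rho' _ _ _))
  have t1 : ∫⁻ v, ∫⁻ u, rho B 1 (fun i => κ * v i) u *
      Gf a b P1 P2 (fun u v i => σ * (u i - κ * v i) + q * v i) (fun v i => p * v i)
        (fun y u => rho B W1 (fun i => σ / (1 + σ ^ 2) * y i) u)
        (fun y v => rho 1 W2 (fun i => g / (1 + b ^ 2 * σ ^ 2 + g ^ 2) * y i) v)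
        (ENNReal.ofReal (Real.exp (n * (I + R1 - δ)))) (ENNReal.ofReal (Real.exp (n * (I2 - δ))))
        u v
      ∂(Measure.pi fun _ : Fin n => gaussianReal 0 B) ∂(stdGaussN n) ≤ η + η + η + η := by
    refine (split4 B hB0 κ _ _ _ _ A1 A2 A3 A4).trans_le ?_
    · clear A1 A2 A3 A4
      refine add_le_add (add_le_add (add_le_add ?_ ?_) ?_) ?_
      · refine b1 _ fun v t z h => ?_
        rw [thr_le, hB, hW1] at h
        rw [Finset.sum_congr rfl fun i _ => ell1 a σ q p κ hκ (v i) (t i) (z i)] at h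
        exact le_abs.2 (Or.inr (by linarith))
      · refine b2 _ fun v t z h => ?_
        rw [thr_le, hW2] at h
        rw [Finset.sum_congr rfl fun i _ => ell2 b σ g κ q p hg (v i) (t i) (z i)] at h
        exact le_abs.2 (Or.inr (by linarith))
      · simp_rw [ind_eq (n := n)]
        refine b3 _ fun v t z h => ?_
        rw [Set.mem_ofPred_eq] at h
        rcases h1 with h1 | ⟨h1, h1'⟩
        · rw [Finset.sum_congr rfl fun i _ => pw1 σ q κ (v i) (t i) (z i)] at h
          have := mul_le_mul_of_nonneg_left h1 (Nat.cast_nonneg (α := ℝ) n)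
          exact le_abs.2 (Or.inl (by linarith))
        · simp only [h1, h1'] at h
          simp at h
          exact absurd h (not_lt.2 (by positivity))
      · simp_rw [ind_eq (n := n)]
        refine b4 _ fun v t z h => ?_
        rw [Set.mem_ofPred_eq] at h
        rcases h2 with h2 | h2
        · rw [Finset.sum_congr rfl fun i _ => pw2 p (v i) (t i) (z i)] at h
          have := mul_le_mul_of_nonneg_left h2 (Nat.cast_nonneg (α := ℝ) n)
          exact le_abs.2 (Or.inl (by linarith))
        · simp only [h2] at h
          simp at h
          exact absurd h (not_lt.2 (by positivity))
  have hLle : (L : ℝ) ≤ 2 * Real.exp (n * (I + 2 * δ)) := by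
    have e1 := (Nat.ceil_lt_add_one (Real.exp_pos (n * (I + 2 * δ))).le).le
    have e2 : 1 ≤ Real.exp (n * (I + 2 * δ)) := Real.one_le_exp (by positivity)
    linarith
  have t2 : ENNReal.ofReal (16 * τ / L) ≤ 16 * η := by
    rw [hη, show (16 : ℝ≥0∞) = ENNReal.ofReal 16 by simp, ← ENNReal.ofReal_mul (by norm_num)]
    refine ENNReal.ofReal_le_ofReal ?_
    have e1 : Real.exp (n * (I + 2 * δ)) ≤ L := Nat.le_ceil _
    have e2 : τ = Real.exp (-(n * δ)) * Real.exp (n * (I + 2 * δ)) := by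
      rw [hτ, ← Real.exp_add]; congr 1; ring
    rw [div_le_iff₀ (by positivity), e2]
    have := mul_le_mul hexp e1 (Real.exp_pos _).le (by positivity)
    linarith
  have t3 : ((M1 - 1 : ℕ) : ℝ≥0∞) * L * ENNReal.ofReal (Real.exp (-(n * (I + R1 - δ)))) ≤ 2 * η := by
    rw [hη, show (2 : ℝ≥0∞) = ENNReal.ofReal 2 by simp, ← ENNReal.ofReal_mul (by norm_num),
      ← ENNReal.ofReal_natCast, ← ENNReal.ofReal_natCast, ← ENNReal.ofReal_mul (by positivity),
      ← ENNReal.ofReal_mul (by positivity)]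
    refine ENNReal.ofReal_le_ofReal ?_
    have e1 : ((M1 - 1 : ℕ) : ℝ) ≤ Real.exp (n * (R1 - 5 * δ)) :=
      ceil_sub_one_le _ (Real.exp_pos _).le
    calc ((M1 - 1 : ℕ) : ℝ) * L * Real.exp (-(n * (I + R1 - δ)))
        ≤ Real.exp (n * (R1 - 5 * δ)) * (2 * Real.exp (n * (I + 2 * δ))) *
          Real.exp (-(n * (I + R1 - δ))) := by gcongr
      _ = 2 * (Real.exp (-(n * δ)) * Real.exp (-(n * δ))) := by
          rw [mul_left_comm, mul_assoc, ← Real.exp_add, ← Real.exp_add, ← Real.exp_add]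
          congr 2; ring
      _ ≤ 2 * (ε / 34 * 1) := by
          gcongr
          exact Real.exp_le_one_iff.2 (by simp; positivity)
      _ = _ := by ring
  have t4 : ((M2 - 1 : ℕ) : ℝ≥0∞) * ENNReal.ofReal (Real.exp (-(n * (I2 - δ)))) ≤ η := by
    rw [hη, ← ENNReal.ofReal_natCast, ← ENNReal.ofReal_mul (by positivity)]
    refine ENNReal.ofReal_le_ofReal ?_
    have e1 : ((M2 - 1 : ℕ) : ℝ) ≤ Real.exp (n * (I2 - 2 * δ)) :=
      ceil_sub_one_le _ (Real.exp_pos _).le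
    calc ((M2 - 1 : ℕ) : ℝ) * Real.exp (-(n * (I2 - δ)))
        ≤ Real.exp (n * (I2 - 2 * δ)) * Real.exp (-(n * (I2 - δ))) := by gcongr
      _ = Real.exp (-(n * δ)) := by
          rw [← Real.exp_add]
          congr 1; ring
      _ ≤ ε / 34 := hexp
  calc _ ≤ 16 * η + 4 * η + 2 * (η + η + η + η + 2 * η + η) := by gcongr
    _ = 34 * η := by ring
    _ ≤ ENNReal.ofReal ε := by
        rw [hη, show (34 : ℝ≥0∞) = ENNReal.ofReal 34 by simp, ← ENNReal.ofReal_mul (by norm_num)]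
        refine ENNReal.ofReal_le_ofReal ?_
        linarith

lemma rate_conv (n M : ℕ) (hn : 0 < n) (r k δ T : ℝ) (hM : Real.exp (n * ((1 / 2) * Real.log r - k * δ)) ≤ M)
    (hT : k * δ ≤ ((1 / 2) * Real.logb 2 r - T) * Real.log 2) : T ≤ Real.logb 2 M / n := by
  have hl2 : 0 < Real.log 2 := Real.log_pos (by norm_num)
  have hn' : (0:ℝ) < n := by exact_mod_cast hn
  have h := (Real.le_log_iff_exp_le (lt_of_lt_of_le (Real.exp_pos _) hM)).2 hM
  unfold Real.logb at *
  rw [div_div, le_div_iff₀ (by positivity)]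
  have e : ((1 / 2) * (Real.log r / Real.log 2) - T) * Real.log 2 =
      (1 / 2) * Real.log r - T * Real.log 2 := by field_simp
  rw [e] at hT
  have := mul_le_mul_of_nonneg_left hT hn'.le
  nlinarith

lemma core (a b σ q p P1 P2 R1 R2 ε : ℝ) (hP1 : 0 ≤ P1) (hP2 : 0 ≤ P2) (hε : 0 < ε)
    (h1 : σ ^ 2 + q ^ 2 < P1 ∨ (σ = 0 ∧ q = 0)) (h2 : p ^ 2 < P2 ∨ p = 0)
    (hR1 : R1 - ε < (1 / 2) * Real.logb 2 (1 + σ ^ 2))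
    (hR2 : R2 - ε < (1 / 2) * Real.logb 2 ((1 + b ^ 2 * σ ^ 2 + (b * q + p) ^ 2) /
        (1 + b ^ 2 * σ ^ 2))) :
    ∃ (n M1 M2 : ℕ) (f1 : Fin M1 → Fin M2 → Fin n → ℝ)
    (f2 : Fin M2 → Fin n → ℝ) (g1 : (Fin n → ℝ) → Fin M1) (g2 : (Fin n → ℝ) → Fin M2),
    0 < n ∧ 0 < M1 ∧ 0 < M2 ∧
    (1 / (M1 * M2) : ℝ) * ∑ w1 : Fin M1, ∑ w2 : Fin M2,
      ((1 / n : ℝ) * ∑ i, (f1 w1 w2 i) ^ 2) ≤ P1 ∧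
    (1 / M2 : ℝ) * ∑ w2 : Fin M2, ((1 / n : ℝ) * ∑ i, (f2 w2 i) ^ 2) ≤ P2 ∧
    R1 - ε ≤ Real.logb 2 M1 / n ∧ R2 - ε ≤ Real.logb 2 M2 / n ∧
    peG1T1 a n M1 M2 f1 f2 g1 ≤ ε ∧ peG2T1 b n M1 M2 f1 f2 g2 ≤ ε := by
  have hl2 : 0 < Real.log 2 := Real.log_pos (by norm_num)
  obtain ⟨d1, hd1, h1'⟩ : ∃ d : ℝ, 0 < d ∧ (σ ^ 2 + q ^ 2 + d ≤ P1 ∨ (σ = 0 ∧ q = 0)) := by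
    rcases h1 with h | h
    · exact ⟨P1 - (σ ^ 2 + q ^ 2), by linarith, Or.inl (by linarith)⟩
    · exact ⟨1, one_pos, Or.inr h⟩
  obtain ⟨d2, hd2, h2'⟩ : ∃ d : ℝ, 0 < d ∧ (p ^ 2 + d ≤ P2 ∨ p = 0) := by
    rcases h2 with h | h
    · exact ⟨P2 - p ^ 2, by linarith, Or.inl (by linarith)⟩
    · exact ⟨1, one_pos, Or.inr h⟩
  set e1 := ((1 / 2) * Real.logb 2 (1 + σ ^ 2) - (R1 - ε)) * Real.log 2 with he1
  set e2 := ((1 / 2) * Real.logb 2 ((1 + b ^ 2 * σ ^ 2 + (b * q + p) ^ 2) /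
        (1 + b ^ 2 * σ ^ 2)) - (R2 - ε)) * Real.log 2 with he2
  have he1p : 0 < e1 := mul_pos (by linarith) hl2
  have he2p : 0 < e2 := mul_pos (by linarith) hl2
  obtain ⟨δ, hδ, k1, k2, k3, k4⟩ : ∃ δ : ℝ, 0 < δ ∧ δ ≤ d1 ∧ δ ≤ d2 ∧ 5 * δ ≤ e1 ∧ 2 * δ ≤ e2 := by
    refine ⟨min (min d1 d2) (min (e1 / 5) (e2 / 2)), by positivity, ?_, ?_, ?_, ?_⟩
    · exact (min_le_left _ _).trans (min_le_left _ _)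
    · exact (min_le_left _ _).trans (min_le_right _ _)
    · have := (min_le_right (min d1 d2) (min (e1 / 5) (e2 / 2))).trans (min_le_left _ _)
      linarith
    · have := (min_le_right (min d1 d2) (min (e1 / 5) (e2 / 2))).trans (min_le_right _ _)
      linarith
  obtain ⟨n, ⟨M1, M2, f1, f2, g1, g2, hM1, hM2, hp1, hp2, hpe1, hpe2⟩, hn⟩ :=
    ((asym a b σ q p P1 P2 δ ε hP1 hP2 hδ hε
      (h1'.imp (fun h => by linarith) id) (h2'.imp (fun h => by linarith) id)).and
      (Filter.eventually_gt_atTop 0)).exists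
  have hn' : (0:ℝ) < n := by exact_mod_cast hn
  have hM1p : (0:ℝ) < M1 := lt_of_lt_of_le (Real.exp_pos _) hM1
  have hM2p : (0:ℝ) < M2 := lt_of_lt_of_le (Real.exp_pos _) hM2
  refine ⟨n, M1, M2, f1, f2, g1, g2, hn, by exact_mod_cast hM1p, by exact_mod_cast hM2p,
    ?_, ?_, ?_, ?_, hpe1, hpe2⟩
  · rw [one_div, inv_mul_le_iff₀ (by positivity)]
    calc _ ≤ ∑ w1 : Fin M1, ∑ w2 : Fin M2, P1 := by
          refine Finset.sum_le_sum fun w1 _ => Finset.sum_le_sum fun w2 _ => ?_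
          rw [one_div, inv_mul_le_iff₀ hn']
          exact hp1 w1 w2
      _ = _ := by simp; ring
  · rw [one_div, inv_mul_le_iff₀ (by positivity)]
    calc _ ≤ ∑ w2 : Fin M2, P2 := by
          refine Finset.sum_le_sum fun w2 _ => ?_
          rw [one_div, inv_mul_le_iff₀ hn']
          exact hp2 w2
      _ = _ := by simp
  · exact rate_conv n M1 hn _ 5 δ _ hM1 k3
  · exact rate_conv n M2 hn _ 2 δ _ hM2 k4

/-- **Achievability of the dirty-paper-coding region (arbitrary `b`).**  For every
`α ∈ [0,1]`, every rate pair `(R₁,R₂)` with `R₁ ≤ ½ log(1 + αP₁)` and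
`R₂ ≤ ½ log((1 + b²P₁ + 2|b|√((1−α)P₁P₂) + P₂)/(1 + b²αP₁))` lies in the capacity
region `C^{T₁}_{GIFC}` of the Gaussian IFC with degraded message sets in which
transmitter 1 knows both messages. -/
theorem DPC12_achievable (a b P1 P2 : ℝ) (hP1 : 0 ≤ P1) (hP2 : 0 ≤ P2)
    (α : ℝ) (hα0 : 0 ≤ α) (hα1 : α ≤ 1) (R1 R2 : ℝ)
    (hR1 : R1 ≤ (1 / 2) * Real.logb 2 (1 + α * P1))
    (hR2 : R2 ≤ (1 / 2) * Real.logb 2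
      ((1 + b ^ 2 * P1 + 2 * |b| * Real.sqrt ((1 - α) * P1 * P2) + P2)
        / (1 + b ^ 2 * α * P1))) :
    (R1, R2) ∈ CapacityGT1 a b P1 P2 := by
  refine subset_closure ?_
  intro ε hε
  simp only
  have hα1' : 0 ≤ 1 - α := by linarith
  obtain ⟨s, hs1, hs2⟩ : ∃ s : ℝ, s ^ 2 = 1 ∧ b * s = |b| := by
    rcases le_total 0 b with h | h
    · exact ⟨1, by norm_num, by rw [abs_of_nonneg h, mul_one]⟩
    · exact ⟨-1, by norm_num, by rw [abs_of_nonpos h]; ring⟩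
  obtain ⟨σ, hσ⟩ : ∃ σ, σ = Real.sqrt (α * P1) := ⟨_, rfl⟩
  obtain ⟨q', hq'⟩ : ∃ q', q' = Real.sqrt ((1 - α) * P1) := ⟨_, rfl⟩
  obtain ⟨p, hp⟩ : ∃ p, p = Real.sqrt P2 := ⟨_, rfl⟩
  have sσ : σ ^ 2 = α * P1 := by rw [hσ]; exact Real.sq_sqrt (by positivity)
  have sq' : q' ^ 2 = (1 - α) * P1 := by rw [hq']; exact Real.sq_sqrt (by positivity)
  have sp : p ^ 2 = P2 := by rw [hp]; exact Real.sq_sqrt (by positivity)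
  have sqp : Real.sqrt ((1 - α) * P1 * P2) = q' * p := by
    rw [hq', hp]; exact Real.sqrt_mul (by positivity) _
  have c1 : ContinuousAt (fun t : ℝ => (1 / 2) * Real.logb 2 (1 + (t * σ) ^ 2)) 1 := by
    have : (1 + (1 * σ) ^ 2) ≠ 0 := by positivity
    unfold Real.logb
    fun_prop (disch := assumption)
  have c2 : ContinuousAt (fun t : ℝ => (1 / 2) * Real.logb 2 ((1 + b ^ 2 * (t * σ) ^ 2 +
      (b * (t * (s * q')) + t * p) ^ 2) / (1 + b ^ 2 * (t * σ) ^ 2))) 1 := by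
    have h1 : (1 + b ^ 2 * (1 * σ) ^ 2) ≠ 0 := by positivity
    have h2 : ((1 + b ^ 2 * (1 * σ) ^ 2 +
      (b * (1 * (s * q')) + 1 * p) ^ 2) / (1 + b ^ 2 * (1 * σ) ^ 2)) ≠ 0 := by positivity
    unfold Real.logb
    fun_prop (disch := assumption)
  have v1 : R1 - ε < (1 / 2) * Real.logb 2 (1 + (1 * σ) ^ 2) := by
    rw [one_mul, sσ]; linarith
  have v2 : R2 - ε < (1 / 2) * Real.logb 2 ((1 + b ^ 2 * (1 * σ) ^ 2 +
      (b * (1 * (s * q')) + 1 * p) ^ 2) / (1 + b ^ 2 * (1 * σ) ^ 2)) := by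
    have e1 : (1 + b ^ 2 * (1 * σ) ^ 2 + (b * (1 * (s * q')) + 1 * p) ^ 2) =
        1 + b ^ 2 * P1 + 2 * |b| * Real.sqrt ((1 - α) * P1 * P2) + P2 := by
      rw [sqp, ← hs2]
      linear_combination b ^ 2 * sσ + b ^ 2 * s ^ 2 * sq' + b ^ 2 * (1 - α) * P1 * hs1 + sp
    have e2 : (1 + b ^ 2 * (1 * σ) ^ 2) = 1 + b ^ 2 * α * P1 := by
      linear_combination b ^ 2 * sσ
    rw [e1, e2]; linarith
  have n1 := (c1.eventually_const_lt v1).filter_mono (nhdsWithin_le_nhds (s := Set.Iio 1))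
  have n2 := (c2.eventually_const_lt v2).filter_mono (nhdsWithin_le_nhds (s := Set.Iio 1))
  have n3 : ∀ᶠ t : ℝ in nhdsWithin 1 (Set.Iio 1), t ∈ Set.Ioo (0:ℝ) 1 :=
    Ioo_mem_nhdsLT one_pos
  obtain ⟨t, ⟨k1, k2⟩, ht0, ht1⟩ := ((n1.and n2).and n3).exists
  have ht2 : t ^ 2 < 1 := by nlinarith
  refine core a b (t * σ) (t * (s * q')) (t * p) P1 P2 R1 R2 ε hP1 hP2 hε ?_ ?_ k1 k2
  · rcases hP1.eq_or_lt with h | h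
    · right
      rw [hσ, hq', ← h]; simp
    · left
      have : (t * σ) ^ 2 + (t * (s * q')) ^ 2 = t ^ 2 * P1 := by
        linear_combination t ^ 2 * sσ + t ^ 2 * s ^ 2 * sq' + t ^ 2 * (1 - α) * P1 * hs1
      rw [this]; nlinarith
  · rcases hP2.eq_or_lt with h | h
    · right
      rw [hp, ← h]; simp
    · left
      have : (t * p) ^ 2 = t ^ 2 * P2 := by
        linear_combination t ^ 2 * sp
      rw [this]; nlinarith
end
end

section
/- (Csiszár sum identity) Let (Y_{1,1},…,Y_{1,n}), (Y_{2,1},…,Y_{2,n}) and T be jointly distributed finite-valued random variables. Then ∑_{i=1}^n I(Y_{2,i+1}ⁿ ; Y_{1,i} | Y₁^{i−1}, T) = ∑_{i=1}^n I(Y₁^{i−1} ; Y_{2,i} | Y_{2,i+1}ⁿ, T), where Y₁^{i−1} = (Y_{1,1},…,Y_{1,i−1}) and Y_{2,i+1}ⁿ = (Y_{2,i+1},…,Y_{2,n}), with the conventions that Y₁⁰ and Y_{2,n+1}ⁿ are empty (conditioning on or arguments equal to an empty tuple give the degenerate constant random variable). -/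
open scoped BigOperators

noncomputable section

/-- Shannon entropy (base 2) of a finitely supported probability vector. -/
def ent {A : Type*} [Fintype A] (p : A → ℝ) : ℝ :=
  -∑ a, p a * Real.logb 2 (p a)

/-- The distribution (pushforward) of a random variable `f` on a finite
probability space with probability mass function `μ`. -/
def lawOf {Ω A : Type*} [Fintype Ω] [DecidableEq A] (μ : Ω → ℝ) (f : Ω → A) : A → ℝ :=
  fun a => ∑ ω, if f ω = a then μ ω else 0

/-- Shannon entropy (base 2) of a random variable `f` on a finite probability space. -/
def entRV {Ω A : Type*} [Fintype Ω] [Fintype A] [DecidableEq A] (μ : Ω → ℝ) (f : Ω → A) : ℝ :=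
  ent (lawOf μ f)

/-- Conditional mutual information `I(f; g | h)` (base 2) on a finite probability space. -/
def cmiRV {Ω A B C : Type*} [Fintype Ω] [Fintype A] [Fintype B] [Fintype C]
    [DecidableEq A] [DecidableEq B] [DecidableEq C]
    (μ : Ω → ℝ) (f : Ω → A) (g : Ω → B) (h : Ω → C) : ℝ :=
  entRV μ (fun ω => (f ω, h ω)) + entRV μ (fun ω => (g ω, h ω))
    - entRV μ (fun ω => (f ω, g ω, h ω)) - entRV μ h

/-- Entropy determined by the partition induced by a relation. -/
def entRel {Ω : Type*} [Fintype Ω] (μ : Ω → ℝ) (r : Ω → Ω → Prop) : ℝ :=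
  open Classical in
  -∑ ω, μ ω * Real.logb 2 (∑ ω', if r ω' ω then μ ω' else 0)

theorem entRV_eq_entRel {Ω A : Type*} [Fintype Ω] [Fintype A] [DecidableEq A]
    (μ : Ω → ℝ) (f : Ω → A) (r : Ω → Ω → Prop) (h : ∀ ω' ω, f ω' = f ω ↔ r ω' ω) :
    entRV μ f = entRel μ r := by
  classical
  unfold entRV ent entRel
  have h1 : ∀ a, lawOf μ f a * Real.logb 2 (lawOf μ f a)
      = ∑ ω, if f ω = a then μ ω * Real.logb 2 (lawOf μ f (f ω)) else 0 := by
    intro a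
    change (∑ ω, if f ω = a then μ ω else 0) * Real.logb 2 (lawOf μ f a) = _
    rw [Finset.sum_mul]
    refine Finset.sum_congr rfl fun ω _ => ?_
    by_cases hh : f ω = a
    · subst hh
      simp
    · simp [hh]
  rw [Finset.sum_congr rfl fun a _ => h1 a, Finset.sum_comm]
  congr 1
  refine Finset.sum_congr rfl fun ω _ => ?_
  rw [Finset.sum_ite_eq]
  simp only [Finset.mem_univ, if_true, lawOf, h]

/-- Agreement on the first `a` entries of `Y1`, the entries of `Y2` from `b` on, and `Tv`. -/
def agree {Ω A B T : Type*} (n : ℕ) (Y1 : Fin n → Ω → A) (Y2 : Fin n → Ω → B) (Tv : Ω → T)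
    (a b : ℕ) (x y : Ω) : Prop :=
  (∀ j : Fin n, j.1 < a → Y1 j x = Y1 j y) ∧ (∀ j : Fin n, b ≤ j.1 → Y2 j x = Y2 j y) ∧ Tv x = Tv y

theorem pre_iff {Ω A : Type*} {n : ℕ} (Y : Fin n → Ω → A) (a : ℕ) (ha : a ≤ n) (x y : Ω) :
    ((fun j : Fin a => Y ⟨j.1, lt_of_lt_of_le j.2 ha⟩ x) = fun j : Fin a => Y ⟨j.1, lt_of_lt_of_le j.2 ha⟩ y)
      ↔ ∀ j : Fin n, j.1 < a → Y j x = Y j y := by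
  constructor
  · intro h j hj
    exact congrFun h ⟨j.1, hj⟩
  · intro h
    funext j
    exact h _ j.2

theorem suf_iff {Ω A : Type*} {n : ℕ} (Y : Fin n → Ω → A) (b : ℕ) (x y : Ω) :
    ((fun j : Fin (n - b) => Y ⟨b + j.1, by have := j.2; omega⟩ x)
        = fun j : Fin (n - b) => Y ⟨b + j.1, by have := j.2; omega⟩ y)
      ↔ ∀ j : Fin n, b ≤ j.1 → Y j x = Y j y := by
  constructor
  · intro h j hj
    have h2 := congrFun h ⟨j.1 - b, by have := j.2; omega⟩
    have h3 : (⟨b + (j.1 - b), by have := j.2; omega⟩ : Fin n) = j := Fin.ext (by simp; omega)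
    simp only [h3] at h2
    exact h2
  · intro h
    funext j
    exact h _ (by simp)

theorem pre_succ {Ω A : Type*} {n : ℕ} (Y : Fin n → Ω → A) (i : Fin n) (x y : Ω) :
    (∀ j : Fin n, j.1 < i.1 + 1 → Y j x = Y j y)
      ↔ Y i x = Y i y ∧ ∀ j : Fin n, j.1 < i.1 → Y j x = Y j y := by
  constructor
  · intro h
    exact ⟨h i (by omega), fun j hj => h j (by omega)⟩
  · rintro ⟨h, h'⟩ j hj
    rcases Nat.lt_succ_iff_lt_or_eq.1 hj with h1 | h1
    · exact h' j h1
    · rw [Fin.ext h1]; exact h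

theorem suf_succ {Ω A : Type*} {n : ℕ} (Y : Fin n → Ω → A) (i : Fin n) (x y : Ω) :
    (∀ j : Fin n, i.1 ≤ j.1 → Y j x = Y j y)
      ↔ Y i x = Y i y ∧ ∀ j : Fin n, i.1 + 1 ≤ j.1 → Y j x = Y j y := by
  constructor
  · intro h
    exact ⟨h i le_rfl, fun j hj => h j (by omega)⟩
  · rintro ⟨h, h'⟩ j hj
    rcases Nat.lt_or_eq_of_le hj with h1 | h1
    · exact h' j h1
    · rw [← Fin.ext h1]; exact h

theorem suf_all {Ω A : Type*} {n : ℕ} (Y : Fin n → Ω → A) (x y : Ω) :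
    (∀ j : Fin n, n ≤ j.1 → Y j x = Y j y) ↔ True :=
  iff_true_intro fun j hj => absurd j.2 (by omega)

theorem pre_zero {Ω A : Type*} {n : ℕ} (Y : Fin n → Ω → A) (x y : Ω) :
    (∀ j : Fin n, j.1 < 0 → Y j x = Y j y) ↔ True :=
  iff_true_intro fun j hj => absurd hj (by omega)

/-- **Csiszár sum identity.**  For jointly distributed finite-valued random vectors
`Y₁ⁿ`, `Y₂ⁿ` and a random variable `T`,
`∑ᵢ I(Y_{2,i+1}ⁿ ; Y_{1,i} | Y₁^{i-1}, T) = ∑ᵢ I(Y₁^{i-1} ; Y_{2,i} | Y_{2,i+1}ⁿ, T)`. -/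
theorem csiszar_sum_identity {Ω A B T : Type*} [Fintype Ω] [Fintype A] [Fintype B] [Fintype T]
    [DecidableEq A] [DecidableEq B] [DecidableEq T]
    (μ : Ω → ℝ) (hμ0 : ∀ ω, 0 ≤ μ ω) (hμ1 : ∑ ω, μ ω = 1)
    (n : ℕ) (Y1 : Fin n → Ω → A) (Y2 : Fin n → Ω → B) (Tv : Ω → T) :
    ∑ i : Fin n,
        cmiRV μ
          (fun ω => fun j : Fin (n - (i.1 + 1)) =>
            Y2 ⟨i.1 + 1 + j.1, by have := j.2; have := i.2; omega⟩ ω)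
          (fun ω => Y1 i ω)
          (fun ω => ((fun j : Fin i.1 => Y1 ⟨j.1, by have := j.2; have := i.2; omega⟩ ω), Tv ω))
      = ∑ i : Fin n,
        cmiRV μ
          (fun ω => fun j : Fin i.1 => Y1 ⟨j.1, by have := j.2; have := i.2; omega⟩ ω)
          (fun ω => Y2 i ω)
          (fun ω => ((fun j : Fin (n - (i.1 + 1)) =>
            Y2 ⟨i.1 + 1 + j.1, by have := j.2; have := i.2; omega⟩ ω), Tv ω)) := by
  let H : ℕ → ℕ → ℝ := fun a b => entRel μ (agree n Y1 Y2 Tv a b)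
  have hL : ∀ i : Fin n, cmiRV μ
          (fun ω => fun j : Fin (n - (i.1 + 1)) =>
            Y2 ⟨i.1 + 1 + j.1, by have := j.2; have := i.2; omega⟩ ω)
          (fun ω => Y1 i ω)
          (fun ω => ((fun j : Fin i.1 => Y1 ⟨j.1, by have := j.2; have := i.2; omega⟩ ω), Tv ω))
      = H i.1 (i.1+1) + H (i.1+1) n - H (i.1+1) (i.1+1) - H i.1 n := by
    intro i
    have e1 := fun x y => pre_iff Y1 i.1 i.2.le x y
    have e2 := fun x y => suf_iff Y2 (i.1+1) x y
    unfold cmiRV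
    congr 1
    · congr 1
      · congr 1
        all_goals
          refine entRV_eq_entRel _ _ _ fun x y => ?_
          simp only [Prod.mk.injEq, e1, e2, agree, pre_succ, suf_all]
          try tauto
      · refine entRV_eq_entRel _ _ _ fun x y => ?_
        simp only [Prod.mk.injEq, e1, e2, agree, pre_succ, suf_all]
        tauto
    · refine entRV_eq_entRel _ _ _ fun x y => ?_
      simp only [Prod.mk.injEq, e1, e2, agree, pre_succ, suf_all]
      tauto
  have hR : ∀ i : Fin n, cmiRV μ
          (fun ω => fun j : Fin i.1 => Y1 ⟨j.1, by have := j.2; have := i.2; omega⟩ ω)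
          (fun ω => Y2 i ω)
          (fun ω => ((fun j : Fin (n - (i.1 + 1)) =>
            Y2 ⟨i.1 + 1 + j.1, by have := j.2; have := i.2; omega⟩ ω), Tv ω))
      = H i.1 (i.1+1) + H 0 i.1 - H i.1 i.1 - H 0 (i.1+1) := by
    intro i
    have e1 := fun x y => pre_iff Y1 i.1 i.2.le x y
    have e2 := fun x y => suf_iff Y2 (i.1+1) x y
    unfold cmiRV
    congr 1
    · congr 1
      · congr 1
        all_goals
          refine entRV_eq_entRel _ _ _ fun x y => ?_
          simp only [Prod.mk.injEq, e1, e2, agree, suf_succ Y2 i, pre_zero]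
          try tauto
      · refine entRV_eq_entRel _ _ _ fun x y => ?_
        simp only [Prod.mk.injEq, e1, e2, agree, suf_succ Y2 i, pre_zero]
        tauto
    · refine entRV_eq_entRel _ _ _ fun x y => ?_
      simp only [Prod.mk.injEq, e1, e2, agree, pre_zero]
      tauto
  rw [Finset.sum_congr rfl fun i _ => hL i, Finset.sum_congr rfl fun i _ => hR i]
  rw [Fin.sum_univ_eq_sum_range (fun i => H i (i+1) + H (i+1) n - H (i+1) (i+1) - H i n) n,
    Fin.sum_univ_eq_sum_range (fun i => H i (i+1) + H 0 i - H i i - H 0 (i+1)) n]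
  have t1 := Finset.sum_range_sub (fun i => H i n) n
  have t2 := Finset.sum_range_sub (fun i => H 0 i) n
  have t3 := Finset.sum_range_sub (fun i => H i i) n
  simp only [Finset.sum_add_distrib, Finset.sum_sub_distrib] at *
  linarith
end
end

section
/- Let X = (X₁,…,X_k) be an arbitrary zero-mean real random vector with covariance matrix K that admits a joint density with well-defined finite differential entropies, let S ⊆ {1,…,k} with complement S̄, and let X* = (X₁*,…,X_k*) be a centered Gaussian vector with the same covariance matrix K. Then h(X_S | X_{S̄}) ≤ h(X*_S | X*_{S̄}). -/
open scoped BigOperators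
open MeasureTheory ProbabilityTheory

noncomputable section

/-- Differential entropy (base 2) of a measure `ν` with respect to a reference
measure `vol` (Lebesgue measure below), computed from the Radon–Nikodym density:
`h(ν) = -∫ f log₂ f d(vol)` where `f = dν/d(vol)`. -/
def dH {E : Type*} [MeasurableSpace E] (vol ν : Measure E) : ℝ :=
  -∫ x, (ν.rnDeriv vol x).toReal * Real.logb 2 (ν.rnDeriv vol x).toReal ∂vol

/-- The measure `ν` admits a density with a well-defined finite differential entropy. -/
def HasFiniteDH {E : Type*} [MeasurableSpace E] (vol ν : Measure E) : Prop :=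
  ν ≪ vol ∧
    Integrable (fun x => (ν.rnDeriv vol x).toReal * Real.logb 2 (ν.rnDeriv vol x).toReal) vol

lemma auxB {E F : Type*} [MeasurableSpace E] [MeasurableSpace F] (v : Measure E) (w : Measure F)
    [SigmaFinite v] [SigmaFinite w] (P Q : Measure E) [IsProbabilityMeasure P]
    [IsProbabilityMeasure Q] (π : E → F) (hπ : Measurable π) (hP : P ≪ v) (hQ : Q ≪ v)
    (hPπ : P.map π ≪ w) (hQπ : Q.map π ≪ w)
    (hq : ∀ᵐ x ∂v, Q.rnDeriv v x ≠ 0) (hqπ : ∀ᵐ y ∂w, (Q.map π).rnDeriv w y ≠ 0)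
    (i1 : Integrable (llr P v) P) (i2 : Integrable (llr (P.map π) w) (P.map π))
    (i3 : Integrable (llr Q v) P) (i4 : Integrable (llr (Q.map π) w) (P.map π)) :
    ∫ x, llr Q v x ∂P - ∫ y, llr (Q.map π) w y ∂(P.map π)
      ≤ ∫ x, llr P v x ∂P - ∫ y, llr (P.map π) w y ∂(P.map π) := by
  have : IsProbabilityMeasure (P.map π) := Measure.isProbabilityMeasure_map hπ.aemeasurable
  have : IsProbabilityMeasure (Q.map π) := Measure.isProbabilityMeasure_map hπ.aemeasurable
  set p := P.rnDeriv v with hp_def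
  set q := Q.rnDeriv v with hq_def
  set p' := (P.map π).rnDeriv w with hp'_def
  set q' := (Q.map π).rnDeriv w with hq'_def
  have mp : Measurable p := Measure.measurable_rnDeriv _ _
  have mq : Measurable q := Measure.measurable_rnDeriv _ _
  have mp' : Measurable p' := Measure.measurable_rnDeriv _ _
  have mq' : Measurable q' := Measure.measurable_rnDeriv _ _
  let F : E → ℝ := fun x => llr Q v x - llr (Q.map π) w (π x) - (llr P v x - llr (P.map π) w (π x))
  have j2 : Integrable (fun x => llr (P.map π) w (π x)) P :=
    (integrable_map_measure i2.aestronglyMeasurable hπ.aemeasurable).1 i2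
  have j4 : Integrable (fun x => llr (Q.map π) w (π x)) P :=
    (integrable_map_measure i4.aestronglyMeasurable hπ.aemeasurable).1 i4
  have iF : Integrable F P := (i3.sub j4).sub (i1.sub j2)
  have eF : ∫ x, F x ∂P = (∫ x, llr Q v x ∂P - ∫ y, llr (Q.map π) w y ∂(P.map π))
      - (∫ x, llr P v x ∂P - ∫ y, llr (P.map π) w y ∂(P.map π)) := by
    rw [integral_map hπ.aemeasurable i2.aestronglyMeasurable,
      integral_map hπ.aemeasurable i4.aestronglyMeasurable,
      ← integral_sub i3 j4, ← integral_sub i1 j2]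
    exact integral_sub (i3.sub j4) (i1.sub j2)
  -- exponential
  have hexp : ∀ᵐ x ∂P, ENNReal.ofReal (Real.exp (F x)) = (p x)⁻¹ * (q x * (p' (π x) / q' (π x))) := by
    have a1 : ∀ᵐ x ∂P, 0 < p x := Measure.rnDeriv_pos hP
    have a2 : ∀ᵐ x ∂P, p x ≠ ⊤ := hP.ae_le (Measure.rnDeriv_ne_top _ _)
    have a3 : ∀ᵐ x ∂P, q x ≠ 0 := hP.ae_le hq
    have a4 : ∀ᵐ x ∂P, q x ≠ ⊤ := hP.ae_le (Measure.rnDeriv_ne_top _ _)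
    have a5 : ∀ᵐ x ∂P, 0 < p' (π x) := ae_of_ae_map hπ.aemeasurable (Measure.rnDeriv_pos hPπ)
    have a6 : ∀ᵐ x ∂P, p' (π x) ≠ ⊤ :=
      ae_of_ae_map hπ.aemeasurable (hPπ.ae_le (Measure.rnDeriv_ne_top _ _))
    have a7 : ∀ᵐ x ∂P, q' (π x) ≠ 0 := ae_of_ae_map hπ.aemeasurable (hPπ.ae_le hqπ)
    have a8 : ∀ᵐ x ∂P, q' (π x) ≠ ⊤ :=
      ae_of_ae_map hπ.aemeasurable (hPπ.ae_le (Measure.rnDeriv_ne_top _ _))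
    filter_upwards [a1, a2, a3, a4, a5, a6, a7, a8] with x b1 b2 b3 b4 b5 b6 b7 b8
    have c1 := ENNReal.toReal_pos b1.ne' b2
    have c3 := ENNReal.toReal_pos b3 b4
    have c5 := ENNReal.toReal_pos b5.ne' b6
    have c7 := ENNReal.toReal_pos b7 b8
    have : Real.exp (F x) = (p x).toReal⁻¹ * ((q x).toReal * ((p' (π x)).toReal / (q' (π x)).toReal)) := by
      simp only [F, llr, Real.exp_sub]
      rw [Real.exp_log c1, Real.exp_log c3, Real.exp_log c5, Real.exp_log c7]
      field_simp
    rw [this, ENNReal.ofReal_mul (by positivity), ENNReal.ofReal_mul (by positivity),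
      ENNReal.ofReal_div_of_pos c7, ENNReal.ofReal_inv_of_pos c1, ENNReal.ofReal_toReal b2,
      ENNReal.ofReal_toReal b4, ENNReal.ofReal_toReal b6, ENNReal.ofReal_toReal b8]
  have hle : ∫⁻ x, ENNReal.ofReal (Real.exp (F x)) ∂P ≤ 1 := by
    rw [lintegral_congr_ae hexp, ← lintegral_rnDeriv_mul hP (by fun_prop)]
    calc ∫⁻ x, p x * ((p x)⁻¹ * (q x * (p' (π x) / q' (π x)))) ∂v
        ≤ ∫⁻ x, q x * (p' (π x) / q' (π x)) ∂v := by
          refine lintegral_mono fun x => ?_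
          rw [← mul_assoc]
          exact mul_le_of_le_one_left zero_le (ENNReal.mul_inv_le_one _)
      _ = ∫⁻ x, p' (π x) / q' (π x) ∂Q := lintegral_rnDeriv_mul hQ (by fun_prop)
      _ = ∫⁻ y, p' y / q' y ∂(Q.map π) := (lintegral_map (f := fun y => p' y / q' y) (by fun_prop) hπ).symm
      _ = ∫⁻ y, q' y * (p' y / q' y) ∂w := (lintegral_rnDeriv_mul hQπ (by fun_prop)).symm
      _ ≤ ∫⁻ y, p' y ∂w := lintegral_mono fun y => ENNReal.mul_div_le
      _ ≤ (P.map π) Set.univ := Measure.lintegral_rnDeriv_le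
      _ = 1 := measure_univ
  have mF : Measurable F := by
    have := measurable_llr Q v
    have := measurable_llr P v
    have := measurable_llr (P.map π) w
    have := measurable_llr (Q.map π) w
    fun_prop
  have ie : Integrable (fun x => Real.exp (F x)) P := by
    refine ⟨by fun_prop, ?_⟩
    rw [hasFiniteIntegral_iff_ofReal (Filter.Eventually.of_forall fun x => (Real.exp_pos _).le)]
    exact hle.trans_lt ENNReal.one_lt_top
  have he1 : ∫ x, Real.exp (F x) ∂P ≤ 1 := by
    rw [integral_eq_lintegral_of_nonneg_ae (Filter.Eventually.of_forall fun x => (Real.exp_pos _).le)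
      (by fun_prop)]
    exact ENNReal.toReal_le_of_le_ofReal zero_le_one (by simpa using hle)
  have : ∫ x, F x ∂P ≤ ∫ x, (Real.exp (F x) - 1) ∂P :=
    integral_mono iF (ie.sub (integrable_const _)) fun x => by
      have := Real.add_one_le_exp (F x)
      show F x ≤ Real.exp (F x) - 1
      linarith
  rw [integral_sub ie (integrable_const _)] at this
  simp at this
  linarith

lemma pi_gauss {ι : Type*} [Fintype ι] : Measure.pi (fun _ : ι => gaussianReal 0 1)
    = volume.withDensity (fun x => ENNReal.ofReal (∏ i, gaussianPDFReal 0 1 (x i))) := by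
  refine Measure.pi_eq fun s hs => ?_
  rw [withDensity_apply _ (MeasurableSet.univ_pi hs), volume_pi, Measure.restrict_pi_pi,
    ← ofReal_integral_eq_lintegral_ofReal]
  · rw [integral_fintype_prod_eq_prod (f := fun _ x => gaussianPDFReal 0 1 x),
      ENNReal.ofReal_prod_of_nonneg]
    · refine Finset.prod_congr rfl fun i _ => ?_
      rw [gaussianReal_apply_eq_integral _ one_ne_zero]
    · intro i _
      exact integral_nonneg fun x => gaussianPDFReal_nonneg _ _ _
  · exact Integrable.fintype_prod (f := fun _ x => gaussianPDFReal 0 1 x)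
      fun i => (integrable_gaussianPDFReal 0 1).restrict
  · exact Filter.Eventually.of_forall fun x =>
      Finset.prod_nonneg fun i _ => gaussianPDFReal_nonneg _ _ _

lemma pi_gauss_map {ι : Type*} [Fintype ι] (c : ι → ℝ) :
    (Measure.pi (fun _ : ι => gaussianReal 0 1)).map (fun x => ∑ i, c i * x i)
      = gaussianReal 0 (Real.toNNReal (∑ i, c i * c i)) := by
  apply Measure.ext_of_charFun
  ext t
  rw [charFun_apply_real, integral_map (Measurable.aemeasurable (by fun_prop)) (by fun_prop), charFun_gaussianReal]
  have : ∀ x : ι → ℝ, Complex.exp (t * ((∑ i, c i * x i : ℝ) : ℂ) * Complex.I)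
      = ∏ i, Complex.exp ((t * c i : ℝ) * x i * Complex.I) := by
    intro x
    rw [← Complex.exp_sum]
    congr 1
    push_cast
    rw [Finset.mul_sum, Finset.sum_mul]
    refine Finset.sum_congr rfl fun i _ => by ring
  simp_rw [this]
  rw [integral_fintype_prod_eq_prod (f := fun i (x : ℝ) => Complex.exp ((t * c i : ℝ) * x * Complex.I))]
  simp_rw [← charFun_apply_real, charFun_gaussianReal]
  rw [← Complex.exp_sum]
  congr 1
  rw [Real.coe_toNNReal _ (Finset.sum_nonneg fun i _ => mul_self_nonneg _)]
  push_cast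
  simp only [mul_zero, zero_mul, zero_sub, Finset.sum_mul, Finset.sum_div, ← Finset.sum_neg_distrib]
  refine Finset.sum_congr rfl fun i _ => by ring

lemma gauss_ne_zero {ι : Type*} [Fintype ι] (G : Measure (ι → ℝ)) [IsProbabilityMeasure G]
    (K : Matrix ι ι ℝ)
    (hG : ∀ c : ι → ℝ, G.map (fun x => ∑ i, c i * x i)
      = gaussianReal 0 (Real.toNNReal (∑ i, ∑ j, c i * K i j * c j)))
    (hac : G ≪ volume) (c : ι → ℝ) (hc : c ≠ 0) : ∑ i, ∑ j, c i * K i j * c j ≠ 0 := by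
  intro h0
  have h := hG c
  rw [h0, Real.toNNReal_zero, gaussianReal_zero_var] at h
  have m : Measurable (fun x : ι → ℝ => ∑ i, c i * x i) := by fun_prop
  have h1 : G ((fun x : ι → ℝ => ∑ i, c i * x i) ⁻¹' {0}) = 1 := by
    rw [← Measure.map_apply m (measurableSet_singleton 0), h]; simp
  let L : (ι → ℝ) →ₗ[ℝ] ℝ := ∑ i, c i • LinearMap.proj i
  have hL : ((fun x : ι → ℝ => ∑ i, c i * x i) ⁻¹' {0}) = (LinearMap.ker L : Set (ι → ℝ)) := by
    ext x; simp [L]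
  rw [hL, hac (Measure.addHaar_submodule volume (LinearMap.ker L) ?_)] at h1
  · exact zero_ne_one h1
  · intro ht
    have hc' : c ∈ LinearMap.ker L := ht ▸ Submodule.mem_top
    have : ∑ i, c i * c i = 0 := by simpa [L] using hc'
    rw [Finset.sum_eq_zero_iff_of_nonneg (fun i _ => mul_self_nonneg _)] at this
    exact hc (funext fun i => by simpa using this i (Finset.mem_univ i))

open Matrix MatrixOrder in
lemma gauss_density {ι : Type*} [Fintype ι] (G : Measure (ι → ℝ)) [IsProbabilityMeasure G]
    (K : Matrix ι ι ℝ) (hK : K.PosSemidef)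
    (hG : ∀ c : ι → ℝ, G.map (fun x => ∑ i, c i * x i)
      = gaussianReal 0 (Real.toNNReal (∑ i, ∑ j, c i * K i j * c j)))
    (hac : G ≪ volume) :
    ∃ (a : ℝ) (M : Matrix ι ι ℝ), G.rnDeriv volume =ᵐ[volume]
      fun x => ENNReal.ofReal (Real.exp (a + ∑ i, ∑ j, M i j * (x i * x j))) := by
  classical
  have hdet : K.det ≠ 0 := by
    intro h0
    obtain ⟨c, hc, hc0⟩ := Matrix.exists_mulVec_eq_zero_iff.2 h0
    refine gauss_ne_zero G K hG hac c hc ?_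
    refine Finset.sum_eq_zero fun i _ => ?_
    have := congrFun hc0 i
    simp only [Matrix.mulVec, dotProduct, Pi.zero_apply] at this
    simp_rw [mul_assoc]
    rw [← Finset.mul_sum, this, mul_zero]
  obtain ⟨A, hA⟩ : ∃ A : Matrix ι ι ℝ, K = Aᵀ * A := by
    obtain ⟨A, hA⟩ := CStarAlgebra.nonneg_iff_eq_star_mul_self.1 (Matrix.nonneg_iff_posSemidef.2 hK)
    exact ⟨A, by simpa [Matrix.star_eq_conjTranspose] using hA⟩
  have hAdet : A.det ≠ 0 := by
    intro h; apply hdet; rw [hA, Matrix.det_mul, h, mul_zero]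
  have hAu : IsUnit A.det := isUnit_iff_ne_zero.2 hAdet
  have hAtu : IsUnit Aᵀ.det := by rwa [Matrix.det_transpose]
  -- T = (Aᵀ)⁻¹
  set N := Measure.pi (fun _ : ι => gaussianReal 0 1) with hN
  have hmap : G = N.map (Matrix.toLin' Aᵀ) := by
    have mA : Measurable (Matrix.toLin' Aᵀ) :=
      (LinearMap.continuous_of_finiteDimensional _).measurable
    have : IsProbabilityMeasure (N.map (Matrix.toLin' Aᵀ)) :=
      Measure.isProbabilityMeasure_map mA.aemeasurable
    apply Measure.ext_of_charFunDual
    ext L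
    rw [charFunDual_eq_charFun_map_one, charFunDual_eq_charFun_map_one,
      Measure.map_map L.measurable mA]
    have hL : ∀ x, L x = ∑ i, L (Pi.single i 1) * x i := by
      intro x
      conv_lhs => rw [← Finset.univ_sum_single x]
      rw [map_sum]
      refine Finset.sum_congr rfl fun i _ => ?_
      rw [mul_comm, ← smul_eq_mul, ← map_smul, ← Pi.single_smul]; simp
    set c : ι → ℝ := fun i => L (Pi.single i 1) with hc
    have e1 : (L : (ι → ℝ) → ℝ) = fun x => ∑ i, c i * x i := funext hL
    have e2 : (L : (ι → ℝ) → ℝ) ∘ (Matrix.toLin' Aᵀ) = fun x => ∑ i, (A *ᵥ c) i * x i := by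
      funext x
      rw [Function.comp_apply, hL, Matrix.toLin'_apply]
      change c ⬝ᵥ (Aᵀ *ᵥ x) = (A *ᵥ c) ⬝ᵥ x
      rw [Matrix.dotProduct_mulVec, Matrix.vecMul_transpose]
    rw [e2, e1, hG, pi_gauss_map]
    congr 3
    change _ = (A *ᵥ c) ⬝ᵥ (A *ᵥ c)
    rw [Matrix.dotProduct_mulVec, ← Matrix.mulVec_transpose, Matrix.mulVec_mulVec, ← hA]
    simp only [Matrix.mulVec, dotProduct, Finset.sum_mul]
    rw [Finset.sum_comm]
    refine Finset.sum_congr rfl fun i _ => Finset.sum_congr rfl fun j _ => ?_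
    have : K j i = K i j := by simpa using congrFun (congrFun hK.1 i) j
    try rw [this]
    ring
  have hdens : G = volume.withDensity (fun x => ENNReal.ofReal |(Aᵀ.det)⁻¹| *
      ENNReal.ofReal (∏ i, gaussianPDFReal 0 1 ((Aᵀ⁻¹ *ᵥ x) i))) := by
    have mA : Measurable (Matrix.toLin' Aᵀ) :=
      (LinearMap.continuous_of_finiteDimensional _).measurable
    have mpdf := measurable_gaussianPDFReal 0 1
    have mT : Measurable fun x : ι → ℝ => Aᵀ⁻¹ *ᵥ x :=
      (LinearMap.continuous_of_finiteDimensional (Matrix.toLin' Aᵀ⁻¹)).measurable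
    ext s hs
    rw [hmap, Measure.map_apply mA hs, hN, pi_gauss, withDensity_apply _ (mA hs),
      withDensity_apply _ hs, lintegral_const_mul, ← smul_eq_mul, ← lintegral_smul_measure,
      ← Measure.restrict_smul, ← Real.map_matrix_volume_pi_eq_smul_volume_pi hAtu.ne_zero,
      setLIntegral_map hs _ mA]
    · refine lintegral_congr fun x => ?_
      rw [Matrix.toLin'_apply, Matrix.mulVec_mulVec, Matrix.nonsing_inv_mul _ hAtu, Matrix.one_mulVec]
    · fun_prop
    · fun_prop
  set T := Aᵀ⁻¹ with hT
  have hpos : 0 < |(Aᵀ.det)⁻¹| * ∏ _i : ι, (√(2 * Real.pi))⁻¹ := by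
    have := hAtu.ne_zero
    positivity
  have mpdf := measurable_gaussianPDFReal 0 1
  have mT : Measurable fun x : ι → ℝ => T *ᵥ x :=
      (LinearMap.continuous_of_finiteDimensional (Matrix.toLin' T)).measurable
  refine ⟨Real.log (|(Aᵀ.det)⁻¹| * ∏ _i : ι, (√(2 * Real.pi))⁻¹), (-(1/2) : ℝ) • (Tᵀ * T), ?_⟩
  rw [hdens]
  refine (Measure.rnDeriv_withDensity _ (by fun_prop)).trans (Filter.Eventually.of_forall fun x => ?_)
  dsimp only
  rw [← ENNReal.ofReal_mul (abs_nonneg _), Real.exp_add, Real.exp_log hpos]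
  congr 1
  simp only [gaussianPDFReal, Finset.prod_mul_distrib, ← Real.exp_sum, NNReal.coe_one, mul_one]
  rw [mul_assoc]
  congr 3
  have h1 : ∑ i, (T *ᵥ x) i * (T *ᵥ x) i = ∑ i, ∑ j, (Tᵀ * T) i j * (x i * x j) := by
    change (T *ᵥ x) ⬝ᵥ (T *ᵥ x) = _
    rw [Matrix.dotProduct_mulVec, ← Matrix.mulVec_transpose, Matrix.mulVec_mulVec]
    simp only [Matrix.mulVec, dotProduct, Finset.sum_mul]
    rw [Finset.sum_comm]
    have hs : (Tᵀ * T)ᵀ = Tᵀ * T := by simp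
    refine Finset.sum_congr rfl fun i _ => Finset.sum_congr rfl fun j _ => ?_
    have : (Tᵀ * T) j i = (Tᵀ * T) i j := congrFun (congrFun hs i) j
    rw [this]; ring
  calc ∑ i, -((T *ᵥ x) i - 0) ^ 2 / 2 = -(1/2) * ∑ i, (T *ᵥ x) i * (T *ᵥ x) i := by
        rw [Finset.mul_sum]; exact Finset.sum_congr rfl fun i _ => by ring
    _ = _ := by
        rw [h1, Finset.mul_sum]
        refine Finset.sum_congr rfl fun i _ => ?_
        rw [Finset.mul_sum]
        refine Finset.sum_congr rfl fun j _ => ?_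
        rw [Matrix.smul_apply, smul_eq_mul]; ring

def HasMom {k : ℕ} (P : Measure (Fin k → ℝ)) (K : Matrix (Fin k) (Fin k) ℝ) : Prop :=
  ∀ i j, Integrable (fun x => x i * x j) P ∧ ∫ x, x i * x j ∂P = K i j

lemma hasMom_gauss {k : ℕ} (G : Measure (Fin k → ℝ)) [IsProbabilityMeasure G]
    (K : Matrix (Fin k) (Fin k) ℝ) (hK : K.PosSemidef)
    (hG : ∀ c : Fin k → ℝ, G.map (fun x => ∑ i, c i * x i)
      = gaussianReal 0 (Real.toNNReal (∑ i, ∑ j, c i * K i j * c j))) : HasMom G K := by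
  have hsym : ∀ i j, K j i = K i j := fun i j => by simpa using congrFun (congrFun hK.1 i) j
  have hnn : ∀ c : Fin k → ℝ, 0 ≤ ∑ i, ∑ j, c i * K i j * c j := by
    intro c
    have := hK.dotProduct_mulVec_nonneg c
    simpa [dotProduct, Matrix.mulVec, Finset.mul_sum, mul_assoc] using this
  have hm : ∀ c : Fin k → ℝ, MemLp (fun x => ∑ i, c i * x i) 2 G ∧
      ∫ x, (∑ i, c i * x i) ^ 2 ∂G = ∑ i, ∑ j, c i * K i j * c j := by
    intro c
    have m : Measurable (fun x : Fin k → ℝ => ∑ i, c i * x i) := by fun_prop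
    constructor
    · have h : MemLp id 2 (G.map (fun x => ∑ i, c i * x i)) := by
        rw [hG c]; exact memLp_id_gaussianReal 2
      exact (memLp_map_measure_iff (by fun_prop) m.aemeasurable).1 h
    · rw [← integral_map (f := fun y : ℝ => y ^ 2) m.aemeasurable (by fun_prop), hG c]
      have h := variance_fun_id_gaussianReal (μ := 0) (v := Real.toNNReal (∑ i, ∑ j, c i * K i j * c j))
      rw [variance_eq_integral (by fun_prop), integral_id_gaussianReal] at h
      simpa [Real.coe_toNNReal _ (hnn c)] using h
  have h1 : ∀ i, MemLp (fun x : Fin k → ℝ => x i) 2 G ∧ ∫ x, (x i) ^ 2 ∂G = K i i := by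
    intro i
    simpa [Pi.single_apply] using hm (Pi.single i 1)
  intro i j
  have hi : Integrable (fun x : Fin k → ℝ => x i * x j) G := (h1 i).1.integrable_mul (h1 j).1
  refine ⟨hi, ?_⟩
  have h2 := (hm (Pi.single i 1 + Pi.single j 1)).2
  have e1 : ∀ x : Fin k → ℝ, ∑ l, (Pi.single i 1 + Pi.single j 1 : Fin k → ℝ) l * x l = x i + x j := by
    intro x; simp [add_mul, Finset.sum_add_distrib, Pi.single_apply]
  have e2 : ∑ l, ∑ m, (Pi.single i 1 + Pi.single j 1 : Fin k → ℝ) l * K l m *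
      (Pi.single i 1 + Pi.single j 1 : Fin k → ℝ) m = K i i + K i j + (K j i + K j j) := by
    simp only [mul_assoc, ← Finset.mul_sum]
    rw [e1]
    simp only [mul_comm (K _ _)]
    rw [e1, e1]
  simp_rw [e1] at h2
  rw [e2, hsym i j] at h2
  have e3 : ∀ x : Fin k → ℝ, (x i + x j) ^ 2 = (x i ^ 2 + 2 * (x i * x j)) + x j ^ 2 := fun x => by ring
  simp_rw [e3] at h2
  have hs : Integrable (fun x : Fin k → ℝ => x i ^ 2 + 2 * (x i * x j)) G :=
    (h1 i).1.integrable_sq.add (hi.const_mul 2)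
  rw [integral_add hs (h1 j).1.integrable_sq,
    integral_add (h1 i).1.integrable_sq (hi.const_mul 2), integral_const_mul, (h1 i).2, (h1 j).2] at h2
  linarith

lemma gauss_comp {k : ℕ} {ι : Type*} [Fintype ι] (φ : ι → Fin k)
    (G : Measure (Fin k → ℝ)) (K : Matrix (Fin k) (Fin k) ℝ)
    (hG : ∀ c : Fin k → ℝ, G.map (fun x => ∑ i, c i * x i)
      = gaussianReal 0 (Real.toNNReal (∑ i, ∑ j, c i * K i j * c j))) (c : ι → ℝ) :
    (G.map (fun x i => x (φ i))).map (fun x => ∑ i, c i * x i)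
      = gaussianReal 0 (Real.toNNReal (∑ i, ∑ j, c i * K.submatrix φ φ i j * c j)) := by
  rw [Measure.map_map (by fun_prop) (by fun_prop)]
  set d : Fin k → ℝ := fun l => ∑ i, if φ i = l then c i else 0 with hd
  have h : ∀ x : Fin k → ℝ, ∑ l, d l * x l = ∑ i, c i * x (φ i) := by
    intro x
    simp only [hd, Finset.sum_mul]
    rw [Finset.sum_comm]
    refine Finset.sum_congr rfl fun i _ => ?_
    simp
  have h1 : ((fun x : ι → ℝ => ∑ i, c i * x i) ∘ fun (x : Fin k → ℝ) i => x (φ i))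
      = fun x => ∑ l, d l * x l := by
    funext x; simp [h]
  rw [h1, hG]
  congr 2
  simp only [mul_assoc, ← Finset.mul_sum]
  rw [h]
  refine Finset.sum_congr rfl fun i _ => ?_
  simp only [mul_comm (K _ _), h, mul_comm _ (c _)]
  rfl

lemma key {k : ℕ} {ι E : Type*} [Fintype ι] [MeasurableSpace E] (v : Measure E) [SigmaFinite v]
    (φ : ι → Fin k) (e : (ι → ℝ) ≃ᵐ E) (he : MeasurePreserving e volume v)
    (G : Measure (Fin k → ℝ)) [IsProbabilityMeasure G]
    (K : Matrix (Fin k) (Fin k) ℝ) (hK : K.PosSemidef)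
    (hG : ∀ c : Fin k → ℝ, G.map (fun x => ∑ i, c i * x i)
      = gaussianReal 0 (Real.toNNReal (∑ i, ∑ j, c i * K i j * c j)))
    (hac : G.map (fun x => e fun i => x (φ i)) ≪ v) :
    (∀ᵐ y ∂v, (G.map (fun x => e fun i => x (φ i))).rnDeriv v y ≠ 0) ∧
    ∃ r : ℝ, ∀ P : Measure (Fin k → ℝ), IsProbabilityMeasure P → HasMom P K →
      P.map (fun x => e fun i => x (φ i)) ≪ v →
      Integrable (llr (G.map (fun x => e fun i => x (φ i))) v) (P.map (fun x => e fun i => x (φ i))) ∧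
      ∫ y, llr (G.map (fun x => e fun i => x (φ i))) v y ∂(P.map (fun x => e fun i => x (φ i))) = r := by
  have mφ : Measurable fun (x : Fin k → ℝ) i => x (φ i) := by fun_prop
  have hmm : ∀ P : Measure (Fin k → ℝ), P.map (fun x => e fun i => x (φ i))
      = (P.map (fun x i => x (φ i))).map e := fun P => by
    rw [Measure.map_map e.measurable mφ]; rfl
  simp only [hmm] at hac ⊢
  set G' := G.map (fun x i => x (φ i)) with hG'
  have : IsProbabilityMeasure G' := Measure.isProbabilityMeasure_map mφ.aemeasurable
  have hac' : ∀ P : Measure (ι → ℝ), P.map e ≪ v → P ≪ volume := by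
    intro P h
    have := h.map e.symm.measurable
    rwa [Measure.map_map e.symm.measurable e.measurable, ← he.map_eq,
      Measure.map_map e.symm.measurable e.measurable, e.symm_comp_self, Measure.map_id,
      Measure.map_id] at this
  obtain ⟨a, M, hd⟩ := gauss_density G' (K.submatrix φ φ) (hK.submatrix φ) (gauss_comp φ G K hG)
    (hac' _ hac)
  have h1 := e.measurableEmbedding.rnDeriv_map G' volume
  rw [he.map_eq] at h1
  have h2 : ∀ᵐ x ∂(volume : Measure (ι → ℝ)), (G'.map e).rnDeriv v (e x)
      = ENNReal.ofReal (Real.exp (a + ∑ i, ∑ j, M i j * (x i * x j))) := h1.trans hd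
  constructor
  · rw [← he.map_eq] at h2 ⊢
    rw [e.measurableEmbedding.ae_map_iff]
    filter_upwards [h2] with x hx
    rw [hx]
    simp [Real.exp_pos]
  · refine ⟨a + ∑ i, ∑ j, M i j * K (φ i) (φ j), fun P hP hPK hPv => ?_⟩
    have hP' := hac' _ hPv
    have : IsProbabilityMeasure (P.map (fun x i => x (φ i))) :=
      Measure.isProbabilityMeasure_map mφ.aemeasurable
    have h3 : (fun x => llr (G'.map e) v (e x)) =ᵐ[P.map (fun x i => x (φ i))]
        fun x => a + ∑ i, ∑ j, M i j * (x i * x j) := by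
      filter_upwards [hP'.ae_le h2] with x hx
      rw [llr, hx, ENNReal.toReal_ofReal (Real.exp_pos _).le, Real.log_exp]
    have mq : Measurable fun x : ι → ℝ => a + ∑ i, ∑ j, M i j * (x i * x j) := by fun_prop
    have i0 : ∀ i j, Integrable (fun x : Fin k → ℝ => M i j * (x (φ i) * x (φ j))) P :=
      fun i j => (hPK _ _).1.const_mul _
    have i1 : Integrable (fun x : Fin k → ℝ => ∑ i, ∑ j, M i j * (x (φ i) * x (φ j))) P :=
      integrable_finsetSum _ fun i _ => integrable_finsetSum _ fun j _ => i0 i j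
    constructor
    · rw [integrable_map_measure (measurable_llr _ _).aestronglyMeasurable e.measurable.aemeasurable]
      refine Integrable.congr ?_ h3.symm
      rw [integrable_map_measure mq.aestronglyMeasurable mφ.aemeasurable]
      exact (integrable_const a).add i1
    · rw [integral_map e.measurable.aemeasurable (measurable_llr _ _).aestronglyMeasurable,
        integral_congr_ae h3, integral_map mφ.aemeasurable mq.aestronglyMeasurable,
        integral_add (integrable_const a) i1, integral_finsetSum _
          fun i _ => integrable_finsetSum _ fun j _ => i0 i j]
      simp only [integral_const, probReal_univ, one_smul]
      congr 1
      refine Finset.sum_congr rfl fun i _ => ?_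
      rw [integral_finsetSum _ fun j _ => i0 i j]
      refine Finset.sum_congr rfl fun j _ => ?_
      rw [integral_const_mul, (hPK _ _).2]

lemma dH_eq {E : Type*} [MeasurableSpace E] (v ν : Measure E) [SigmaFinite v]
    [IsProbabilityMeasure ν] (h : ν ≪ v) : dH v ν = -(∫ x, llr ν v x ∂ν) / Real.log 2 := by
  rw [dH, integral_toReal_rnDeriv_mul h, neg_div, ← integral_div]
  rfl

lemma dH_int {E : Type*} [MeasurableSpace E] (v ν : Measure E) [SigmaFinite v]
    [IsProbabilityMeasure ν] (h : HasFiniteDH v ν) : Integrable (llr ν v) ν := by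
  have h1 := (integrable_toReal_rnDeriv_mul_iff h.1).1 h.2
  refine (h1.mul_const (Real.log 2)).congr (Filter.Eventually.of_forall fun x => ?_)
  have : Real.log 2 ≠ 0 := (Real.log_pos one_lt_two).ne'
  simp only [Real.logb, llr]
  field_simp

/-- **Lemma (Gaussian maximizes conditional differential entropy; Thomas).**
Let `X = (X₁,…,X_k)` be a zero-mean random vector with covariance matrix `K`
admitting well-defined finite differential entropies, `S ⊆ {1,…,k}` with complement
`S̄`, and let `X*` be a centered Gaussian vector with the same covariance matrix `K`
(characterized by all linear functionals being centered Gaussian).  Then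
`h(X_S | X_S̄) ≤ h(X*_S | X*_S̄)`, where `h(X_S|X_S̄) = h(X_S, X_S̄) − h(X_S̄)`. -/
theorem conditional_entropy_le_gaussian {Ω : Type*} [MeasurableSpace Ω]
    (μ : Measure Ω) [IsProbabilityMeasure μ]
    (k : ℕ) (X : Ω → Fin k → ℝ) (hX : Measurable X)
    (hmean : ∀ i, (∫ ω, X ω i ∂μ) = 0)
    (hsq : ∀ i, Integrable (fun ω => (X ω i) ^ 2) μ)
    (K : Matrix (Fin k) (Fin k) ℝ)
    (hK : ∀ i j, K i j = ∫ ω, X ω i * X ω j ∂μ)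
    (G : Measure (Fin k → ℝ)) [IsProbabilityMeasure G]
    (hG : ∀ c : Fin k → ℝ,
      Measure.map (fun x => ∑ i, c i * x i) G
        = gaussianReal 0 (Real.toNNReal (∑ i, ∑ j, c i * K i j * c j)))
    (S : Finset (Fin k))
    (hfin1 : HasFiniteDH (volume : Measure ((↥S → ℝ) × (↥(Sᶜ) → ℝ)))
      (Measure.map (fun ω => ((fun i : ↥S => X ω i.1), (fun i : ↥(Sᶜ) => X ω i.1))) μ))
    (hfin2 : HasFiniteDH (volume : Measure (↥(Sᶜ) → ℝ))
      (Measure.map (fun ω => fun i : ↥(Sᶜ) => X ω i.1) μ))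
    (hfin3 : HasFiniteDH (volume : Measure ((↥S → ℝ) × (↥(Sᶜ) → ℝ)))
      (Measure.map (fun x => ((fun i : ↥S => x i.1), (fun i : ↥(Sᶜ) => x i.1))) G))
    (hfin4 : HasFiniteDH (volume : Measure (↥(Sᶜ) → ℝ))
      (Measure.map (fun x => fun i : ↥(Sᶜ) => x i.1) G)) :
    dH (volume : Measure ((↥S → ℝ) × (↥(Sᶜ) → ℝ)))
        (Measure.map (fun ω => ((fun i : ↥S => X ω i.1), (fun i : ↥(Sᶜ) => X ω i.1))) μ)
      - dH (volume : Measure (↥(Sᶜ) → ℝ))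
          (Measure.map (fun ω => fun i : ↥(Sᶜ) => X ω i.1) μ)
    ≤ dH (volume : Measure ((↥S → ℝ) × (↥(Sᶜ) → ℝ)))
        (Measure.map (fun x => ((fun i : ↥S => x i.1), (fun i : ↥(Sᶜ) => x i.1))) G)
      - dH (volume : Measure (↥(Sᶜ) → ℝ))
          (Measure.map (fun x => fun i : ↥(Sᶜ) => x i.1) G) := by
  have mX : ∀ i, Measurable fun ω => X ω i := fun i => (measurable_pi_apply i).comp hX
  have hmem : ∀ i, MemLp (fun ω => X ω i) 2 μ := fun i =>
    (memLp_two_iff_integrable_sq (mX i).aestronglyMeasurable).2 (hsq i)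
  have hij : ∀ i j, Integrable (fun ω => X ω i * X ω j) μ := fun i j =>
    (hmem i).integrable_mul (hmem j)
  have hPSD : K.PosSemidef := by
    refine Matrix.PosSemidef.of_dotProduct_mulVec_nonneg ?_ ?_
    · ext i j
      simp only [Matrix.conjTranspose_apply, star_trivial]
      rw [hK, hK]
      simp_rw [mul_comm]
    · intro c
      have h : star c ⬝ᵥ (K.mulVec c) = ∫ ω, (∑ i, c i * X ω i) ^ 2 ∂μ := by
        have e : ∀ ω, (∑ i, c i * X ω i) ^ 2 = ∑ i, ∑ j, c i * c j * (X ω i * X ω j) := by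
          intro ω
          rw [sq, Finset.sum_mul_sum]
          refine Finset.sum_congr rfl fun i _ => Finset.sum_congr rfl fun j _ => by ring
        simp_rw [e]
        rw [integral_finsetSum _ fun i _ => integrable_finsetSum _ fun j _ => (hij i j).const_mul _]
        simp only [dotProduct, Matrix.mulVec, star_trivial]
        refine Finset.sum_congr rfl fun i _ => ?_
        rw [integral_finsetSum _ fun j _ => (hij i j).const_mul _, Finset.mul_sum]
        refine Finset.sum_congr rfl fun j _ => ?_
        rw [integral_const_mul, hK]
        ring
      rw [h]
      exact integral_nonneg fun ω => sq_nonneg _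
  set P := μ.map X with hPdef
  have hPp : IsProbabilityMeasure P := Measure.isProbabilityMeasure_map hX.aemeasurable
  have hPK : HasMom P K := by
    intro i j
    have m : Measurable fun x : Fin k → ℝ => x i * x j := by fun_prop
    rw [hPdef, integrable_map_measure m.aestronglyMeasurable hX.aemeasurable,
      integral_map hX.aemeasurable m.aestronglyMeasurable, hK]
    exact ⟨hij i j, rfl⟩
  have hGK := hasMom_gauss G K hPSD hG
  have m1 : Measurable fun x : Fin k → ℝ => ((fun i : ↥S => x i.1), (fun i : ↥(Sᶜ) => x i.1)) := by
    fun_prop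
  have m2 : Measurable fun x : Fin k → ℝ => (fun i : ↥(Sᶜ) => x i.1) := by fun_prop
  have eP1 : Measure.map (fun ω => ((fun i : ↥S => X ω i.1), (fun i : ↥(Sᶜ) => X ω i.1))) μ
      = P.map fun x => ((fun i : ↥S => x i.1), (fun i : ↥(Sᶜ) => x i.1)) := by
    rw [hPdef, Measure.map_map m1 hX]; rfl
  have eP2 : Measure.map (fun ω => fun i : ↥(Sᶜ) => X ω i.1) μ
      = P.map fun x => (fun i : ↥(Sᶜ) => x i.1) := by
    rw [hPdef, Measure.map_map m2 hX]; rfl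
  rw [eP1] at hfin1 ⊢
  rw [eP2] at hfin2 ⊢
  obtain ⟨q1, r1, hr1⟩ := key (volume : Measure ((↥S → ℝ) × (↥(Sᶜ) → ℝ)))
    (Sum.elim (fun i : ↥S => i.1) (fun i : ↥(Sᶜ) => i.1))
    (MeasurableEquiv.sumPiEquivProdPi fun _ => ℝ)
    (volume_measurePreserving_sumPiEquivProdPi fun _ => ℝ) G K hPSD hG hfin3.1
  obtain ⟨q2, r2, hr2⟩ := key (volume : Measure (↥(Sᶜ) → ℝ)) (fun i : ↥(Sᶜ) => i.1)
    (MeasurableEquiv.refl _) (MeasurePreserving.id _) G K hPSD hG hfin4.1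
  have a1 := hr1 P hPp hPK hfin1.1
  have a2 := hr2 P hPp hPK hfin2.1
  have a3 := hr1 G inferInstance hGK hfin3.1
  have a4 := hr2 G inferInstance hGK hfin4.1
  set ψ : (Fin k → ℝ) → (↥S → ℝ) × (↥(Sᶜ) → ℝ) :=
    fun x => ((fun i : ↥S => x i.1), (fun i : ↥(Sᶜ) => x i.1)) with hψ
  set χ : (Fin k → ℝ) → (↥(Sᶜ) → ℝ) := fun x => (fun i : ↥(Sᶜ) => x i.1) with hχ
  change ∀ᵐ y, (G.map ψ).rnDeriv volume y ≠ 0 at q1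
  change ∀ᵐ y, (G.map χ).rnDeriv volume y ≠ 0 at q2
  change Integrable (llr (G.map ψ) volume) (P.map ψ) ∧ ∫ y, llr (G.map ψ) volume y ∂(P.map ψ) = r1 at a1
  change Integrable (llr (G.map χ) volume) (P.map χ) ∧ ∫ y, llr (G.map χ) volume y ∂(P.map χ) = r2 at a2
  change Integrable (llr (G.map ψ) volume) (G.map ψ) ∧ ∫ y, llr (G.map ψ) volume y ∂(G.map ψ) = r1 at a3
  change Integrable (llr (G.map χ) volume) (G.map χ) ∧ ∫ y, llr (G.map χ) volume y ∂(G.map χ) = r2 at a4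
  have pp1 : IsProbabilityMeasure (P.map ψ) := Measure.isProbabilityMeasure_map m1.aemeasurable
  have pp2 : IsProbabilityMeasure (P.map χ) := Measure.isProbabilityMeasure_map m2.aemeasurable
  have pg1 : IsProbabilityMeasure (G.map ψ) := Measure.isProbabilityMeasure_map m1.aemeasurable
  have pg2 : IsProbabilityMeasure (G.map χ) := Measure.isProbabilityMeasure_map m2.aemeasurable
  have c1 : ∀ Q : Measure (Fin k → ℝ), (Q.map ψ).map Prod.snd = Q.map χ := fun Q => by
    rw [Measure.map_map measurable_snd m1]; rfl
  have main := auxB volume volume (P.map ψ) (G.map ψ) Prod.snd measurable_snd hfin1.1 hfin3.1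
  simp only [c1] at main
  have main := main hfin2.1 hfin4.1 q1 q2 (dH_int _ _ hfin1) (dH_int _ _ hfin2) a1.1 a2.1
  rw [dH_eq _ _ hfin1.1, dH_eq _ _ hfin2.1, dH_eq _ _ hfin3.1, dH_eq _ _ hfin4.1, a3.2, a4.2]
  rw [a1.2, a2.2] at main
  have hl : 0 < Real.log 2 := Real.log_pos one_lt_two
  rw [neg_div, neg_div, neg_div, neg_div, sub_neg_eq_add, sub_neg_eq_add, neg_add_eq_sub,
    neg_add_eq_sub, ← sub_div, ← sub_div]
  exact div_le_div_of_nonneg_right (by linarith) hl.le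
end
end

section
/- (The Gaussian weak interference channel is type C degraded.) Let a, b be real with |b| ≤ 1, and let Z₁ ~ N(0,1), Z' ~ N(0,1−b²), Z₂ ~ N(0,1) be Gaussian random variables with Z₁ and Z' independent. Then bZ₁ + Z' has the standard Gaussian distribution N(0,1); consequently, for all real x₁, x₂, the distribution of bx₁ + x₂ + Z₂ (the conditional output law of Y₂ in the Gaussian interference channel given inputs (x₁,x₂)) coincides with the distribution of b·(x₁ + a x₂ + Z₁) + (1 − ab)x₂ + Z', i.e. the conditional law of Y₂ given (X₁,X₂) = (x₁,x₂) is obtained from the conditional law of Y₁ = x₁ + a x₂ + Z₁ by applying a transition kernel depending only on (x₂, y₁). -/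
open MeasureTheory ProbabilityTheory

noncomputable section

/-- **The Gaussian weak interference channel is (type C) stochastically degraded.**
If `|b| ≤ 1`, `Z₁ ~ N(0,1)` and `Z' ~ N(0,1−b²)` are independent and `Z₂ ~ N(0,1)`,
then `bZ₁ + Z'` is standard Gaussian, and for all inputs `(x₁,x₂)` the conditional
output law of `Y₂ = bx₁ + x₂ + Z₂` coincides with the law of
`b(x₁ + a x₂ + Z₁) + (1 − ab)x₂ + Z'`, i.e. the conditional law of `Y₂` is obtained
from the conditional law of `Y₁ = x₁ + a x₂ + Z₁` by a transition kernel depending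
only on `(x₂, y₁)`. -/
theorem gaussian_weak_IFC_degraded {Ω Ω₂ : Type*} [MeasurableSpace Ω] [MeasurableSpace Ω₂]
    (μ : Measure Ω) [IsProbabilityMeasure μ] (μ₂ : Measure Ω₂) [IsProbabilityMeasure μ₂]
    (a b : ℝ) (hb : |b| ≤ 1)
    (Z1 Z' : Ω → ℝ) (Z2 : Ω₂ → ℝ)
    (hZ1meas : Measurable Z1) (hZ'meas : Measurable Z')
    (hZ1 : Measure.map Z1 μ = gaussianReal 0 1)
    (hZ' : Measure.map Z' μ = gaussianReal 0 (Real.toNNReal (1 - b ^ 2)))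
    (hZ2 : Measure.map Z2 μ₂ = gaussianReal 0 1)
    (hindep : IndepFun Z1 Z' μ) :
    Measure.map (fun ω => b * Z1 ω + Z' ω) μ = gaussianReal 0 1 ∧
    ∀ x1 x2 : ℝ,
      Measure.map (fun ω => b * x1 + x2 + Z2 ω) μ₂
        = Measure.map (fun ω => b * (x1 + a * x2 + Z1 ω) + (1 - a * b) * x2 + Z' ω) μ := by
  have hZ2m : AEMeasurable Z2 μ₂ := by
    by_contra h
    rw [Measure.map_of_not_aemeasurable h] at hZ2
    exact (IsProbabilityMeasure.ne_zero (gaussianReal 0 1)) hZ2.symm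
  have hbZ : Measure.map (fun ω => b * Z1 ω) μ = gaussianReal (b * 0) (NNReal.mk (b ^ 2) (sq_nonneg b) * 1) := by
    rw [← gaussianReal_map_const_mul b, ← hZ1, Measure.map_map (by fun_prop) hZ1meas]
    rfl
  have hsum : Measure.map (fun ω => b * Z1 ω + Z' ω) μ = gaussianReal 0 1 := by
    have hind : IndepFun (fun ω => b * Z1 ω) Z' μ :=
      hindep.comp (φ := fun x => b * x) (ψ := id) (by fun_prop) measurable_id
    have h := gaussianReal_add_gaussianReal_of_indepFun hind hbZ hZ'
    have hv : (NNReal.mk (b ^ 2) (sq_nonneg b) * 1 + Real.toNNReal (1 - b ^ 2) : NNReal) = 1 := by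
      have h1 : b ^ 2 ≤ 1 := (sq_le_one_iff_abs_le_one b).2 hb
      ext
      rw [NNReal.coe_add, NNReal.coe_mul, Real.coe_toNNReal _ (by linarith)]
      simp
    rw [hv] at h
    simpa [Pi.add_def] using h
  refine ⟨hsum, fun x1 x2 => ?_⟩
  have e1 : Measure.map (fun ω => b * x1 + x2 + Z2 ω) μ₂
      = Measure.map (fun x => b * x1 + x2 + x) (Measure.map Z2 μ₂) := by
    rw [AEMeasurable.map_map_of_aemeasurable (by fun_prop) hZ2m]
    rfl
  have e2 : Measure.map (fun ω => b * (x1 + a * x2 + Z1 ω) + (1 - a * b) * x2 + Z' ω) μ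
      = Measure.map (fun x => b * x1 + x2 + x) (Measure.map (fun ω => b * Z1 ω + Z' ω) μ) := by
    rw [Measure.map_map (by fun_prop) (by fun_prop)]
    congr 1
    funext ω
    simp only [Function.comp]
    ring
  rw [e1, e2, hZ2, hsum]
end
end
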